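/- arXiv:1502.04178 — 2 statements merged into one kernel-verified Lean document; each statement's English description precedes it below -/
import Mathlib

section
/- Let f be C²-smooth on an open neighbourhood of S^{n-1}. Then ∫ |∇_S f|² dσ_{n-1} ≤ ∫ ‖f''_S‖²_HS dσ_{n-1}. Moreover, if the restriction of f to S^{n-1} is orthogonal to all linear functions, then ∫ |∇_S f|² dσ_{n-1} ≤ (1/(n+2)) ∫ ‖f''_S‖²_HS dσ_{n-1}. -/
open MeasureTheory Metric Filter
open scoped RealInnerProductSpace ENNReal NNReal

noncomputable section

namespace SecondOrderConc

/-- Euclidean space ℝⁿ. -/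
abbrev E (n : ℕ) : Type := EuclideanSpace ℝ (Fin n)

/-- The uniform (normalized rotation-invariant) probability measure `σ_{n-1}`
on the unit sphere `S^{n-1}`, viewed as a measure on the ambient space ℝⁿ. -/
def sphMeasure (n : ℕ) : Measure (E n) :=
  ((((volume : Measure (E n)).toSphere).map Subtype.val) Set.univ)⁻¹ •
    (((volume : Measure (E n)).toSphere).map Subtype.val)

variable {n : ℕ}

/-- Euclidean Hessian of `f` at `x`, as a continuous linear operator on ℝⁿ. -/
def hess (f : E n → ℝ) (x : E n) : E n →L[ℝ] E n :=
  fderiv ℝ (gradient f) x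

/-- Squared Hilbert–Schmidt norm of an operator on ℝⁿ. -/
def hsNormSq (A : E n →L[ℝ] E n) : ℝ :=
  ∑ i : Fin n, ‖A (EuclideanSpace.single i 1)‖ ^ 2

/-- Orthogonal projection of ℝⁿ onto `θ^⊥` (for a unit vector `θ`). -/
def projPerp (θ : E n) : E n →L[ℝ] E n :=
  ContinuousLinearMap.id ℝ (E n) - (innerSL ℝ θ).smulRight θ

/-- Spherical gradient `∇_S f(θ) = ∇f(θ) − ⟨∇f(θ),θ⟩θ`. -/
def sgrad (f : E n → ℝ) (θ : E n) : E n :=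
  gradient f θ - ⟪gradient f θ, θ⟫ • θ

/-- Spherical Hessian `f''_S(θ) = P_{θ^⊥} (f''(θ) − ⟨∇f(θ),θ⟩ I_n) P_{θ^⊥}`. -/
def sHess (f : E n → ℝ) (θ : E n) : E n →L[ℝ] E n :=
  (projPerp θ).comp
    ((hess f θ - ⟪gradient f θ, θ⟫ • ContinuousLinearMap.id ℝ (E n)).comp (projPerp θ))

/-- Spherical Laplacian `Δ_S f(θ) = Tr f''_S(θ)`. -/
def sLap (f : E n → ℝ) (θ : E n) : ℝ :=
  LinearMap.trace ℝ (E n) (sHess f θ).toLinearMap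

/-- Euclidean Laplacian `Δ f = Tr f''`. -/
def eLap (f : E n → ℝ) (x : E n) : ℝ :=
  LinearMap.trace ℝ (E n) (hess f x).toLinearMap

/-- 0-homogeneous extension to `ℝⁿ \ {0}` of (the restriction to the sphere of) `g`. -/
def ext0 (g : E n → ℝ) : E n → ℝ := fun x => g (‖x‖⁻¹ • x)

/-!
The rotational derivatives `L_ij f = x_i ∂_j f - x_j ∂_i f` turn a second-order estimate into a
first-order one. On the sphere `∑ (L_ij f)² = 2 |∇_S f|²`, and the Bochner identity reads
`∑ |∇_S (L_ij f)|² = 2 ‖f''_S‖² + 2 (n - 2) |∇_S f|²`. By Stokes each `L_ij f` is orthogonal to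
the constants, and also to the polynomials of degree at most one if `f` is orthogonal to linear
functions. The Poincaré inequality for functions orthogonal to all polynomials of degree less than
`k` has constant `λ_k = k (k + n - 2)`, so it bounds `∫ ‖f''_S‖²` from below by
`(λ_k - (n - 2)) ∫ |∇_S f|²`, where `λ_1 - (n - 2) = 1` and `λ_2 - (n - 2) = n + 2`.

That Poincaré inequality holds for polynomials because `Δ_S p = |x|² Δ p - λ_k p` for `p`
homogeneous of degree `k`, and it passes to `C¹` functions because polynomials are dense.
-/

section Measure

open scoped Pointwise in
lemma Ioo_smul_coe_preimage {F : Type*} [NormedAddCommGroup F] [NormedSpace ℝ F]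
    (R : F ≃ₗᵢ[ℝ] F) (s : Set F) :
    Set.Ioo (0 : ℝ) 1 • ((↑) '' ((↑) ⁻¹' (R ⁻¹' s) : Set (sphere (0 : F) 1)) : Set F) =
      R ⁻¹' (Set.Ioo (0 : ℝ) 1 • ((↑) '' ((↑) ⁻¹' s : Set (sphere (0 : F) 1)) : Set F)) := by
  ext x
  simp only [Set.mem_smul, Subtype.image_preimage_coe, Set.mem_inter_iff, Set.mem_preimage,
    mem_sphere_iff_norm, sub_zero]
  constructor
  · rintro ⟨r, hr, y, ⟨hy, hys⟩, rfl⟩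
    exact ⟨r, hr, R y, ⟨by rwa [R.norm_map], hys⟩, (map_smul R r y).symm⟩
  · rintro ⟨r, hr, y, ⟨hy, hys⟩, hx⟩
    exact ⟨r, hr, R.symm y, ⟨by rwa [R.symm.norm_map], by rwa [R.apply_symm_apply]⟩,
      R.injective (by rw [map_smul, R.apply_symm_apply, hx])⟩

lemma map_map_coe_toSphere {F : Type*} [NormedAddCommGroup F] [NormedSpace ℝ F]
    [MeasurableSpace F] [BorelSpace F] {μ : Measure F} (R : F ≃ₗᵢ[ℝ] F)
    (hR : MeasurePreserving R μ μ) :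
    (μ.toSphere.map Subtype.val).map R = μ.toSphere.map Subtype.val := by
  ext s hs
  have hRs : MeasurableSet (R ⁻¹' s) := hR.measurable hs
  rw [Measure.map_apply hR.measurable hs, Measure.map_apply measurable_subtype_coe hRs,
    Measure.map_apply measurable_subtype_coe hs,
    Measure.toSphere_apply' _ (measurable_subtype_coe hRs),
    Measure.toSphere_apply' _ (measurable_subtype_coe hs), Ioo_smul_coe_preimage]
  congr 1
  exact hR.measure_preimage_emb R.toHomeomorph.measurableEmbedding _

lemma map_sphMeasure (R : E n ≃ₗᵢ[ℝ] E n) : (sphMeasure n).map R = sphMeasure n := by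
  rw [sphMeasure, Measure.map_smul, map_map_coe_toSphere R R.measurePreserving]

lemma integral_comp_sphMeasure (R : E n ≃ₗᵢ[ℝ] E n) (g : E n → ℝ) :
    ∫ x, g (R x) ∂sphMeasure n = ∫ x, g x ∂sphMeasure n := by
  conv_rhs => rw [← map_sphMeasure R]
  exact (R.toHomeomorph.measurableEmbedding.integral_map g).symm

lemma sphMeasure_univ_le_one : sphMeasure n Set.univ ≤ 1 :=
  ENNReal.inv_mul_le_one _

instance : IsFiniteMeasure (sphMeasure n) :=
  ⟨sphMeasure_univ_le_one.trans_lt ENNReal.one_lt_top⟩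

lemma ae_norm_eq_one : ∀ᵐ x ∂sphMeasure n, ‖x‖ = 1 := by
  refine Measure.ae_smul_measure ?_ _
  exact (ae_map_iff measurable_subtype_coe.aemeasurable
    (isClosed_eq continuous_norm continuous_const).measurableSet).2
    (Eventually.of_forall fun x => norm_eq_of_mem_sphere x)

lemma integral_congr_sphere {g h : E n → ℝ} (H : ∀ x, ‖x‖ = 1 → g x = h x) :
    ∫ x, g x ∂sphMeasure n = ∫ x, h x ∂sphMeasure n :=
  integral_congr_ae (ae_norm_eq_one.mono H)

lemma exists_bound_on_sphere {g : E n → ℝ} (hg : Continuous g) :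
    ∃ C, ∀ x, ‖x‖ = 1 → ‖g x‖ ≤ C := by
  obtain ⟨C, hC⟩ := (isCompact_sphere (0 : E n) 1).exists_bound_of_continuousOn hg.continuousOn
  exact ⟨C, fun x hx => hC x (mem_sphere_zero_iff_norm.2 hx)⟩

lemma memLp_sphMeasure {g : E n → ℝ} (hg : Continuous g) (p : ℝ≥0∞) :
    MemLp g p (sphMeasure n) := by
  obtain ⟨C, hC⟩ := exists_bound_on_sphere hg
  exact MemLp.of_bound hg.aestronglyMeasurable C (ae_norm_eq_one.mono hC)

lemma integrable_sphMeasure {g : E n → ℝ} (hg : Continuous g) : Integrable g (sphMeasure n) :=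
  memLp_one_iff_integrable.1 (memLp_sphMeasure hg 1)

end Measure

section Rotation

variable {g h : E n → ℝ}

/-- The isometry `exp (t A)` generated by a skew-adjoint operator `A`. -/
def rotExp {A : E n →L[ℝ] E n} (hA : A ∈ skewAdjoint (E n →L[ℝ] E n)) (t : ℝ) :
    E n ≃ₗᵢ[ℝ] E n :=
  Unitary.linearIsometryEquiv ⟨NormedSpace.exp (t • A), by
    let _ : NormedAlgebra ℚ (E n →L[ℝ] E n) := .restrictScalars ℚ ℝ _
    exact NormedSpace.exp_mem_unitary_of_mem_skewAdjoint (skewAdjoint.smul_mem t hA)⟩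

lemma rotExp_apply {A : E n →L[ℝ] E n} (hA : A ∈ skewAdjoint (E n →L[ℝ] E n)) (t : ℝ) (x : E n) :
    rotExp hA t x = NormedSpace.exp (t • A) x := rfl

lemma hasDerivAt_comp_rotExp {A : E n →L[ℝ] E n} (hA : A ∈ skewAdjoint (E n →L[ℝ] E n))
    (hg : Differentiable ℝ g) (x : E n) (t : ℝ) :
    HasDerivAt (fun s => g (rotExp hA s x))
      (fderiv ℝ g (rotExp hA t x) (A (rotExp hA t x))) t := by
  have hexp : HasDerivAt (fun s => rotExp hA s x) (A (rotExp hA t x)) t := by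
    simpa [rotExp_apply] using
      (hasDerivAt_exp_smul_const' (𝕂 := ℝ) A t).clm_apply (hasDerivAt_const t x)
  exact (hg _).hasFDerivAt.comp_hasDerivAt t hexp

lemma rotExp_zero {A : E n →L[ℝ] E n} (hA : A ∈ skewAdjoint (E n →L[ℝ] E n)) (x : E n) :
    rotExp hA 0 x = x := by
  rw [rotExp_apply, show (0 : ℝ) • A = 0 from zero_smul ℝ A, NormedSpace.exp_zero,
    one_apply_eq_self]

lemma integral_fderiv_skewAdjoint (hg : ContDiff ℝ 1 g) {A : E n →L[ℝ] E n}
    (hA : A ∈ skewAdjoint (E n →L[ℝ] E n)) :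
    ∫ x, fderiv ℝ g x (A x) ∂sphMeasure n = 0 := by
  have hcont : Continuous fun x => fderiv ℝ g x (A x) :=
    (hg.continuous_fderiv one_ne_zero).clm_apply A.continuous
  obtain ⟨C, hC⟩ := exists_bound_on_sphere hcont
  have hderiv := (hasDerivAt_integral_of_dominated_loc_of_deriv_le (μ := sphMeasure n)
    (F := fun t x => g (rotExp hA t x)) (x₀ := 0) (s := Set.univ) (bound := fun _ => C) univ_mem
    (Eventually.of_forall fun t =>
      (hg.continuous.comp (rotExp hA t).continuous).aestronglyMeasurable)
    (integrable_sphMeasure (hg.continuous.comp (rotExp hA 0).continuous))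
    (hcont.comp (rotExp hA 0).continuous).aestronglyMeasurable
    (ae_norm_eq_one.mono fun x hx t _ => hC _ (by rw [(rotExp hA t).norm_map, hx]))
    (integrable_const C) (Eventually.of_forall fun x t _ =>
      hasDerivAt_comp_rotExp hA (hg.differentiable one_ne_zero) x t)).2
  simp only [integral_comp_sphMeasure, rotExp_zero] at hderiv
  exact hderiv.unique (hasDerivAt_const _ _)

/-- The generator `x ↦ x_i e_j - x_j e_i` of the rotations in the `(i, j)` plane. -/
def rotGen (i j : Fin n) : E n →L[ℝ] E n :=
  (EuclideanSpace.proj i).smulRight (EuclideanSpace.single j (1 : ℝ)) -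
    (EuclideanSpace.proj j).smulRight (EuclideanSpace.single i (1 : ℝ))

lemma rotGen_apply (i j : Fin n) (x : E n) :
    rotGen i j x = x i • EuclideanSpace.single j (1 : ℝ) - x j • EuclideanSpace.single i (1 : ℝ) :=
  rfl

lemma inner_rotGen (i j : Fin n) (v x : E n) : ⟪v, rotGen i j x⟫ = x i * v j - x j * v i := by
  simp [rotGen_apply, inner_sub_right, real_inner_smul_right, EuclideanSpace.inner_single_right]

lemma inner_rotGen_comm (i j : Fin n) (v x : E n) :
    ⟪v, rotGen i j x⟫ = -⟪x, rotGen i j v⟫ := by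
  simp only [inner_rotGen]
  ring

lemma rotGen_mem_skewAdjoint (i j : Fin n) : rotGen i j ∈ skewAdjoint (E n →L[ℝ] E n) := by
  rw [skewAdjoint.mem_iff, ContinuousLinearMap.star_eq_adjoint, eq_comm,
    ContinuousLinearMap.eq_adjoint_iff]
  intro x y
  rw [neg_apply, inner_neg_left, real_inner_comm, inner_rotGen_comm, neg_neg]

/-- The derivative of `g` along the rotation field of the `(i, j)` plane, which is the
vector field `x_i ∂_j - x_j ∂_i`. -/
def rot (i j : Fin n) (g : E n → ℝ) (x : E n) : ℝ := fderiv ℝ g x (rotGen i j x)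

lemma contDiff_rot {k m : WithTop ℕ∞} (hg : ContDiff ℝ m g) (hkm : k + 1 ≤ m) (i j : Fin n) :
    ContDiff ℝ k (rot i j g) :=
  (hg.fderiv_right hkm).clm_apply (rotGen i j).contDiff

lemma continuous_rot (hg : ContDiff ℝ 1 g) (i j : Fin n) : Continuous (rot i j g) :=
  (contDiff_rot hg (zero_add 1).le i j).continuous

lemma rot_mul (hg : Differentiable ℝ g) (hh : Differentiable ℝ h) (i j : Fin n) (x : E n) :
    rot i j (fun y => g y * h y) x = rot i j g x * h x + g x * rot i j h x := by
  simp only [rot, fderiv_fun_mul (hg x) (hh x), add_apply, smul_apply, smul_eq_mul]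
  ring

lemma integral_rot_mul (hg : ContDiff ℝ 1 g) (hh : ContDiff ℝ 1 h) (i j : Fin n) :
    ∫ x, rot i j g x * h x ∂sphMeasure n = -∫ x, g x * rot i j h x ∂sphMeasure n := by
  have hint : ∫ x, rot i j (fun y => g y * h y) x ∂sphMeasure n = 0 :=
    integral_fderiv_skewAdjoint (hg.mul hh) (rotGen_mem_skewAdjoint i j)
  simp only [rot_mul (hg.differentiable one_ne_zero) (hh.differentiable one_ne_zero)] at hint
  have hgh : Integrable (fun x => rot i j g x * h x) (sphMeasure n) :=
    integrable_sphMeasure ((continuous_rot hg i j).mul hh.continuous)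
  have hhg : Integrable (fun x => g x * rot i j h x) (sphMeasure n) :=
    integrable_sphMeasure (hg.continuous.mul (continuous_rot hh i j))
  rw [integral_add hgh hhg] at hint
  exact eq_neg_of_add_eq_zero_left hint

lemma rot_eq_inner (i j : Fin n) (g : E n → ℝ) (x : E n) :
    rot i j g x = ⟪gradient g x, rotGen i j x⟫ := by
  rw [rot, gradient, InnerProductSpace.toDual_symm_apply]

end Rotation

section Bochner

variable {f g h : E n → ℝ} {x v : E n}

lemma sum_inner_rotGen_mul_inner_rotGen (a b c d : E n) :
    ∑ i, ∑ j, ⟪a, rotGen i j b⟫ * ⟪c, rotGen i j d⟫ =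
      2 * (⟪a, c⟫ * ⟪b, d⟫ - ⟪a, d⟫ * ⟪b, c⟫) := by
  have hsymm : 2 * (⟪a, c⟫ * ⟪b, d⟫ - ⟪a, d⟫ * ⟪b, c⟫) =
      ⟪a, c⟫ * ⟪b, d⟫ - ⟪a, d⟫ * ⟪b, c⟫ + (⟪b, d⟫ * ⟪a, c⟫ - ⟪b, c⟫ * ⟪a, d⟫) := by ring
  rw [hsymm]
  simp only [inner_rotGen]
  simp only [PiLp.inner_apply, RCLike.inner_apply, conj_trivial, Finset.sum_mul_sum,
    ← Finset.sum_sub_distrib, ← Finset.sum_add_distrib]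
  refine Finset.sum_congr rfl fun i _ => Finset.sum_congr rfl fun j _ => ?_
  ring

lemma projPerp_apply (x v : E n) : projPerp x v = v - ⟪x, v⟫ • x := by
  simp [projPerp]

lemma inner_projPerp_comm (x v w : E n) : ⟪projPerp x v, w⟫ = ⟪v, projPerp x w⟫ := by
  simp only [projPerp_apply, inner_sub_left, inner_sub_right, real_inner_smul_left,
    real_inner_smul_right, real_inner_comm v x]
  ring

lemma inner_projPerp_self (hx : ‖x‖ = 1) (v : E n) : ⟪x, projPerp x v⟫ = 0 := by
  simp [projPerp_apply, inner_sub_right, real_inner_smul_right, hx]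

lemma projPerp_of_inner_eq_zero (hv : ⟪x, v⟫ = 0) : projPerp x v = v := by
  rw [projPerp_apply, hv, zero_smul, sub_zero]

lemma sgrad_eq_projPerp (g : E n → ℝ) (x : E n) : sgrad g x = projPerp x (gradient g x) := by
  rw [sgrad, projPerp_apply, real_inner_comm]

lemma inner_self_sgrad (g : E n → ℝ) (hx : ‖x‖ = 1) : ⟪x, sgrad g x⟫ = 0 := by
  rw [sgrad_eq_projPerp, inner_projPerp_self hx]

lemma inner_sHess_self (g : E n → ℝ) (hx : ‖x‖ = 1) (v : E n) : ⟪x, sHess g x v⟫ = 0 :=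
  inner_projPerp_self hx _

lemma rot_eq_inner_sgrad (i j : Fin n) (g : E n → ℝ) (x : E n) :
    rot i j g x = ⟪sgrad g x, rotGen i j x⟫ := by
  rw [rot_eq_inner, sgrad, inner_sub_left, real_inner_smul_left, inner_rotGen i j x x]
  ring

lemma sum_rot_mul_rot (g h : E n → ℝ) (hx : ‖x‖ = 1) :
    ∑ i, ∑ j, rot i j g x * rot i j h x = 2 * ⟪sgrad g x, sgrad h x⟫ := by
  simp only [rot_eq_inner_sgrad, sum_inner_rotGen_mul_inner_rotGen, real_inner_self_eq_norm_sq, hx,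
    inner_self_sgrad h hx]
  ring

lemma fderiv_rot (hf : ContDiff ℝ 2 f) (i j : Fin n) (x v : E n) :
    fderiv ℝ (rot i j f) x v = ⟪hess f x v, rotGen i j x⟫ + ⟪gradient f x, rotGen i j v⟫ := by
  have hgrad : DifferentiableAt ℝ (gradient f) x :=
    (InnerProductSpace.toDual ℝ (E n)).symm.differentiable.differentiableAt.comp x
      ((hf.fderiv_right (m := 1) (by norm_num)).differentiable one_ne_zero x)
  have hinner := hgrad.hasFDerivAt.inner ℝ (rotGen i j).hasFDerivAt
  rw [funext (rot_eq_inner i j f), hinner.fderiv]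
  simp [hess, add_comm]

lemma fderiv_rot_of_inner_eq_zero (hf : ContDiff ℝ 2 f) (i j : Fin n) (hv : ⟪x, v⟫ = 0) :
    fderiv ℝ (rot i j f) x v = ⟪sHess f x v, rotGen i j x⟫ + ⟪sgrad f x, rotGen i j v⟫ := by
  have hS : sHess f x v = hess f x v - ⟪gradient f x, x⟫ • v - ⟪x, hess f x v⟫ • x := by
    simp [sHess, projPerp_apply, hv]
    abel
  rw [fderiv_rot hf, hS, sgrad]
  simp only [inner_sub_left, real_inner_smul_left, inner_rotGen]
  ring

lemma sum_fderiv_rot_sq (hf : ContDiff ℝ 2 f) (hx : ‖x‖ = 1) (hv : ⟪x, v⟫ = 0) :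
    ∑ i, ∑ j, fderiv ℝ (rot i j f) x v ^ 2 =
      2 * (‖sHess f x v‖ ^ 2 + ‖sgrad f x‖ ^ 2 * ‖v‖ ^ 2 - ⟪sgrad f x, v⟫ ^ 2) := by
  simp only [fderiv_rot_of_inner_eq_zero hf _ _ hv, add_sq, pow_two ⟪_, _⟫, mul_assoc,
    Finset.sum_add_distrib, ← Finset.mul_sum, sum_inner_rotGen_mul_inner_rotGen,
    real_inner_self_eq_norm_sq, hx, hv, inner_self_sgrad f hx, inner_sHess_self f hx,
    real_inner_comm x (sHess f x v), real_inner_comm v (sgrad f x)]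
  ring

lemma norm_sgrad_sq (g : E n → ℝ) (x : E n) :
    ‖sgrad g x‖ ^ 2 = ∑ m, fderiv ℝ g x (projPerp x (EuclideanSpace.single m 1)) ^ 2 := by
  rw [EuclideanSpace.real_norm_sq_eq]
  refine Finset.sum_congr rfl fun m _ => ?_
  rw [← InnerProductSpace.toDual_symm_apply, ← gradient, ← inner_projPerp_comm, ← sgrad_eq_projPerp,
    EuclideanSpace.inner_single_right]
  simp

lemma sum_norm_projPerp_sq (hx : ‖x‖ = 1) :
    ∑ m, ‖projPerp x (EuclideanSpace.single m 1)‖ ^ 2 = (n : ℝ) - 1 := by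
  have hterm (m : Fin n) : ‖projPerp x (EuclideanSpace.single m 1)‖ ^ 2 = 1 - x m ^ 2 := by
    have hm : ⟪x, EuclideanSpace.single m 1⟫ = x m := by
      simp [EuclideanSpace.inner_single_right]
    rw [projPerp_apply, norm_sub_sq_real, norm_smul, real_inner_smul_right, real_inner_comm x, hm,
      hx, Real.norm_eq_abs, mul_one, sq_abs, PiLp.norm_single, norm_one]
    ring
  simp [hterm, ← EuclideanSpace.real_norm_sq_eq, hx]

lemma sHess_projPerp (hx : ‖x‖ = 1) (v : E n) : sHess f x (projPerp x v) = sHess f x v := by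
  simp [sHess, projPerp_of_inner_eq_zero (inner_projPerp_self hx v)]

/-- A Bochner formula: the coefficient `n - 2` is the Ricci curvature of the sphere. -/
lemma sum_norm_sgrad_rot_sq (hf : ContDiff ℝ 2 f) (hx : ‖x‖ = 1) :
    ∑ i, ∑ j, ‖sgrad (rot i j f) x‖ ^ 2 =
      2 * hsNormSq (sHess f x) + 2 * ((n : ℝ) - 2) * ‖sgrad f x‖ ^ 2 := by
  have hs (m : Fin n) :
      ⟪sgrad f x, projPerp x (EuclideanSpace.single m 1)⟫ = sgrad f x m := by
    rw [← inner_projPerp_comm, projPerp_of_inner_eq_zero (inner_self_sgrad f hx),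
      EuclideanSpace.inner_single_right]
    simp
  calc ∑ i, ∑ j, ‖sgrad (rot i j f) x‖ ^ 2
      = ∑ m, ∑ i, ∑ j,
          fderiv ℝ (rot i j f) x (projPerp x (EuclideanSpace.single m 1)) ^ 2 := by
        simp only [norm_sgrad_sq]
        exact (Finset.sum_congr rfl fun i _ => Finset.sum_comm).trans Finset.sum_comm
    _ = ∑ m, 2 * (‖sHess f x (EuclideanSpace.single m 1)‖ ^ 2 +
          ‖sgrad f x‖ ^ 2 * ‖projPerp x (EuclideanSpace.single m 1)‖ ^ 2 - sgrad f x m ^ 2) := by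
        simp only [sum_fderiv_rot_sq hf hx (inner_projPerp_self hx _), sHess_projPerp hx, hs]
    _ = _ := by
        rw [← Finset.mul_sum, Finset.sum_sub_distrib, Finset.sum_add_distrib, ← Finset.mul_sum,
          sum_norm_projPerp_sq hx, ← EuclideanSpace.real_norm_sq_eq, hsNormSq]
        ring

lemma continuous_gradient (hg : ContDiff ℝ 1 g) : Continuous (gradient g) :=
  (InnerProductSpace.toDual ℝ (E n)).symm.continuous.comp (hg.continuous_fderiv one_ne_zero)

lemma continuous_sgrad (hg : ContDiff ℝ 1 g) : Continuous (sgrad g) := by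
  have := continuous_gradient hg
  unfold sgrad
  fun_prop

end Bochner

section Polynomial

open MvPolynomial (pderiv restrictTotalDegree)

/-- The class in `L²(σ_{n-1})` of a continuous function. -/
def toL2 : C(E n, ℝ) →ₗ[ℝ] Lp ℝ 2 (sphMeasure n) where
  toFun g := (memLp_sphMeasure g.continuous 2).toLp g
  map_add' g h := (memLp_sphMeasure g.continuous 2).toLp_add (memLp_sphMeasure h.continuous 2)
  map_smul' c g := (memLp_sphMeasure g.continuous 2).toLp_const_smul c

lemma coeFn_toL2 (g : C(E n, ℝ)) : toL2 g =ᵐ[sphMeasure n] g :=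
  (memLp_sphMeasure g.continuous 2).coeFn_toLp

lemma inner_toL2 (g h : C(E n, ℝ)) : ⟪toL2 g, toL2 h⟫ = ∫ x, g x * h x ∂sphMeasure n := by
  rw [L2.inner_def]
  refine integral_congr_ae ?_
  filter_upwards [coeFn_toL2 g, coeFn_toL2 h] with x hg hh
  rw [hg, hh]
  exact mul_comm _ _

lemma toL2_congr {g h : C(E n, ℝ)} (H : ∀ x, ‖x‖ = 1 → g x = h x) : toL2 g = toL2 h :=
  (memLp_sphMeasure g.continuous 2).toLp_congr (memLp_sphMeasure h.continuous 2)
    (ae_norm_eq_one.mono H)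

lemma norm_toL2_le {g : C(E n, ℝ)} {C : ℝ} (hC : 0 ≤ C) (hg : ∀ x, ‖x‖ = 1 → ‖g x‖ ≤ C) :
    ‖toL2 g‖ ≤ C := by
  have hbound : ∀ᵐ x ∂sphMeasure n, ‖toL2 g x‖ ≤ C := by
    filter_upwards [coeFn_toL2 g, ae_norm_eq_one] with x hgx hx
    rw [hgx]
    exact hg x hx
  have hmass : measureUnivNNReal (sphMeasure n) ≤ 1 :=
    ENNReal.toNNReal_mono ENNReal.one_ne_top sphMeasure_univ_le_one
  calc ‖toL2 g‖ ≤ (measureUnivNNReal (sphMeasure n) : ℝ) ^ (ENNReal.toReal 2)⁻¹ * C :=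
        Lp.norm_le_of_ae_bound hC hbound
    _ ≤ 1 * C := by
        gcongr
        exact Real.rpow_le_one (NNReal.coe_nonneg _) (by exact_mod_cast hmass) (by positivity)
    _ = C := one_mul C

/-- Polynomials as continuous functions on Euclidean space. -/
def polyEval : MvPolynomial (Fin n) ℝ →ₐ[ℝ] C(E n, ℝ) :=
  MvPolynomial.aeval fun i => ⟨fun x => x i, by fun_prop⟩

lemma coe_polyEval_X (i : Fin n) : ⇑(polyEval (MvPolynomial.X i)) = fun x : E n => x i := by
  simp [polyEval]

lemma coe_polyEval_C (c : ℝ) : ⇑(polyEval (MvPolynomial.C c)) = fun _ : E n => c := by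
  ext
  simp [polyEval]

lemma contDiff_polyEval (p : MvPolynomial (Fin n) ℝ) {m : WithTop ℕ∞} :
    ContDiff ℝ m (polyEval p) := by
  induction p using MvPolynomial.induction_on with
  | C c => rw [coe_polyEval_C]; exact contDiff_const
  | add p q hp hq => rw [map_add]; exact hp.add hq
  | mul_X p i hp =>
    rw [map_mul, ContinuousMap.coe_mul, coe_polyEval_X]
    exact hp.mul (EuclideanSpace.proj (𝕜 := ℝ) i).contDiff

lemma fderiv_polyEval (p : MvPolynomial (Fin n) ℝ) (x v : E n) :
    fderiv ℝ (polyEval p) x v = ∑ m, polyEval (pderiv m p) x * v m := by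
  have hdiff (q : MvPolynomial (Fin n) ℝ) : DifferentiableAt ℝ (polyEval q) x :=
    (contDiff_polyEval q (m := 1)).differentiable one_ne_zero x
  induction p using MvPolynomial.induction_on with
  | C c =>
    rw [coe_polyEval_C]
    simp
  | add p q hp hq =>
    simp only [map_add, ContinuousMap.add_apply, add_mul, Finset.sum_add_distrib, ← hp, ← hq]
    rw [ContinuousMap.coe_add, fderiv_add (hdiff p) (hdiff q), add_apply]
  | mul_X p i hp =>
    have hX : fderiv ℝ (fun y : E n => y i) x v = v i :=
      DFunLike.congr_fun (EuclideanSpace.proj (𝕜 := ℝ) i).fderiv v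
    rw [map_mul, ContinuousMap.coe_mul, fderiv_mul (hdiff p) (hdiff _)]
    simp only [add_apply, smul_apply, smul_eq_mul, hX, hp, coe_polyEval_X, Derivation.leibniz,
      MvPolynomial.pderiv_X, map_add, map_mul, ContinuousMap.add_apply, ContinuousMap.mul_apply,
      add_mul, Finset.sum_add_distrib, Finset.mul_sum, mul_assoc, Pi.single_apply]
    simp [apply_ite, ite_apply]

/-- The derivation `x_i ∂_j - x_j ∂_i` of the polynomial ring, the counterpart of `rot i j`. -/
def rotDer (i j : Fin n) : Derivation ℝ (MvPolynomial (Fin n) ℝ) (MvPolynomial (Fin n) ℝ) :=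
  MvPolynomial.X (R := ℝ) i • pderiv j - MvPolynomial.X (R := ℝ) j • pderiv i

lemma rotDer_apply (i j : Fin n) (p : MvPolynomial (Fin n) ℝ) :
    rotDer i j p = MvPolynomial.X i * pderiv j p - MvPolynomial.X j * pderiv i p := rfl

lemma rot_polyEval (i j : Fin n) (p : MvPolynomial (Fin n) ℝ) :
    rot i j (polyEval p) = polyEval (rotDer i j p) := by
  ext x
  rw [rot, fderiv_polyEval]
  simp [rotDer_apply, rotGen_apply, mul_sub, Finset.sum_sub_distrib,
    coe_polyEval_X, mul_comm (x _)]

/-- The class in `L²(σ_{n-1})` of a polynomial. -/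
def polyL2 : MvPolynomial (Fin n) ℝ →ₗ[ℝ] Lp ℝ 2 (sphMeasure n) :=
  toL2 ∘ₗ polyEval.toLinearMap

lemma polyL2_apply (p : MvPolynomial (Fin n) ℝ) : polyL2 p = toL2 (polyEval p) := rfl

/-- The space of restrictions to the sphere of polynomials of degree at most `N`, which is the
sum of the spaces of spherical harmonics of degree at most `N`. -/
def polySpace (n N : ℕ) : Submodule ℝ (Lp ℝ 2 (sphMeasure n)) :=
  (restrictTotalDegree (Fin n) ℝ N).map polyL2

instance (N : ℕ) : FiniteDimensional ℝ (polySpace n N) := by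
  unfold polySpace
  infer_instance

lemma polyL2_mem_polySpace {N : ℕ} {p : MvPolynomial (Fin n) ℝ} (hp : p.totalDegree ≤ N) :
    polyL2 p ∈ polySpace n N :=
  Submodule.mem_map_of_mem ((MvPolynomial.mem_restrictTotalDegree _ _ _).2 hp)

lemma exists_of_mem_polySpace {N : ℕ} {u : Lp ℝ 2 (sphMeasure n)} (hu : u ∈ polySpace n N) :
    ∃ p : MvPolynomial (Fin n) ℝ, p.totalDegree ≤ N ∧ polyL2 p = u := by
  obtain ⟨p, hp, rfl⟩ := hu
  exact ⟨p, (MvPolynomial.mem_restrictTotalDegree _ _ _).1 hp, rfl⟩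

lemma polySpace_mono : Monotone (polySpace n) := fun _ _ hMN _ hu => by
  obtain ⟨p, hp, rfl⟩ := exists_of_mem_polySpace hu
  exact polyL2_mem_polySpace (hp.trans hMN)

lemma separatesPoints_range_polyEval :
    (polyEval (n := n)).range.SeparatesPoints := fun x y hxy => by
  obtain ⟨i, hi⟩ : ∃ i, x i ≠ y i := by
    by_contra! h
    exact hxy (PiLp.ext h)
  exact ⟨_, ⟨_, ⟨MvPolynomial.X i, rfl⟩, rfl⟩, by simpa [coe_polyEval_X] using hi⟩

lemma toL2_mem_closure (g : C(E n, ℝ)) : toL2 g ∈ (⨆ N, polySpace n N).topologicalClosure := by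
  rw [← SetLike.mem_coe, Submodule.topologicalClosure_coe, Metric.mem_closure_iff]
  intro ε hε
  obtain ⟨_, ⟨p, rfl⟩, hp⟩ :=
    ContinuousMap.exists_mem_subalgebra_near_continuous_of_isCompact_of_separatesPoints
      separatesPoints_range_polyEval g (isCompact_sphere (0 : E n) 1) (half_pos hε)
  refine ⟨polyL2 p, Submodule.mem_iSup_of_mem p.totalDegree (polyL2_mem_polySpace le_rfl), ?_⟩
  rw [dist_comm, dist_eq_norm, polyL2_apply, ← map_sub]
  refine (norm_toL2_le (half_pos hε).le fun x hx => ?_).trans_lt (half_lt_self hε)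
  exact (hp x (mem_sphere_zero_iff_norm.2 hx)).le

lemma tendsto_starProjection_toL2 (g : C(E n, ℝ)) :
    Tendsto (fun N => (polySpace n N).starProjection (toL2 g)) atTop (nhds (toL2 g)) := by
  have hlim := Submodule.starProjection_tendsto_closure_iSup (polySpace n) polySpace_mono (toL2 g)
  rwa [Submodule.starProjection_eq_self_iff.2 (toL2_mem_closure g)] at hlim

end Polynomial

section SphericalLaplacian

open MvPolynomial (pderiv)

lemma pderiv_pderiv_comm {R σ : Type*} [CommRing R] (i j : σ) (p : MvPolynomial σ R) :
    pderiv i (pderiv j p) = pderiv j (pderiv i p) := by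
  classical
  have hbracket : ⁅pderiv i, pderiv j⁆ = (0 : Derivation R (MvPolynomial σ R) _) :=
    MvPolynomial.derivation_ext fun m => by
      rw [Derivation.commutator_apply, MvPolynomial.pderiv_X, MvPolynomial.pderiv_X,
        Pi.single_apply, Pi.single_apply, apply_ite (pderiv i), apply_ite (pderiv j)]
      simp
  exact sub_eq_zero.1 (DFunLike.congr_fun hbracket p)

lemma totalDegree_pderiv_le {R σ : Type*} [CommSemiring R] (i : σ) (p : MvPolynomial σ R) :
    (pderiv i p).totalDegree ≤ p.totalDegree - 1 := by
  refine Finset.sup_le fun m hm => ?_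
  rw [MvPolynomial.mem_support_iff, MvPolynomial.coeff_pderiv] at hm
  have hdeg := MvPolynomial.le_totalDegree (MvPolynomial.mem_support_iff.2 (left_ne_zero_of_mul hm))
  rw [Finsupp.sum_add_index' (fun _ => rfl) (fun _ _ _ => rfl), Finsupp.sum_single_index rfl]
    at hdeg
  exact Nat.le_sub_one_of_lt hdeg

/-- The spherical Laplacian `½ ∑ (x_i ∂_j - x_j ∂_i)²`, acting on polynomials. -/
def polySphLap : MvPolynomial (Fin n) ℝ →ₗ[ℝ] MvPolynomial (Fin n) ℝ :=
  (2⁻¹ : ℝ) • ∑ i, ∑ j, (rotDer i j).toLinearMap ∘ₗ (rotDer i j).toLinearMap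

lemma polySphLap_apply (p : MvPolynomial (Fin n) ℝ) :
    polySphLap p = (2⁻¹ : ℝ) • ∑ i, ∑ j, rotDer i j (rotDer i j p) := by
  simp [polySphLap]

/-- The Euclidean Laplacian acting on polynomials. -/
def polyLap : MvPolynomial (Fin n) ℝ →ₗ[ℝ] MvPolynomial (Fin n) ℝ :=
  ∑ i, (pderiv i).toLinearMap ∘ₗ (pderiv i).toLinearMap

lemma polyLap_apply (p : MvPolynomial (Fin n) ℝ) : polyLap p = ∑ i, pderiv i (pderiv i p) := by
  simp [polyLap]

lemma totalDegree_polyLap_le (p : MvPolynomial (Fin n) ℝ) :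
    (polyLap p).totalDegree ≤ p.totalDegree - 1 := by
  rw [polyLap_apply]
  refine MvPolynomial.totalDegree_finsetSum_le fun i _ => ?_
  exact (totalDegree_pderiv_le i _).trans ((Nat.sub_le _ 1).trans (totalDegree_pderiv_le i p))

/-- The number `k (k + n - 2)`, which is the eigenvalue of minus the spherical Laplacian on
spherical harmonics of degree `k`. -/
def sphEigenvalue (n k : ℕ) : ℝ := k * (k + n - 2)

lemma monotone_sphEigenvalue_succ : Monotone fun k => sphEigenvalue n (k + 1) :=
  monotone_nat_of_le_succ fun k => by
    simp only [sphEigenvalue]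
    push_cast
    nlinarith [(k.cast_nonneg : (0 : ℝ) ≤ k), (n.cast_nonneg : (0 : ℝ) ≤ n)]

lemma rotDer_rotDer (i j : Fin n) (p : MvPolynomial (Fin n) ℝ) :
    rotDer i j (rotDer i j p) =
      MvPolynomial.X i ^ 2 * pderiv j (pderiv j p) + MvPolynomial.X j ^ 2 * pderiv i (pderiv i p)
      - 2 * (MvPolynomial.X i * (MvPolynomial.X j * pderiv j (pderiv i p)))
      - MvPolynomial.X i * pderiv i p - MvPolynomial.X j * pderiv j p
      + if i = j then 2 * (MvPolynomial.X i * pderiv i p) else 0 := by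
  rcases eq_or_ne i j with rfl | hij
  · simp only [rotDer_apply, sub_self, if_true]
    ring
  · simp only [rotDer_apply, MvPolynomial.pderiv_mul, map_sub, MvPolynomial.pderiv_X_self,
      MvPolynomial.pderiv_X_of_ne hij, MvPolynomial.pderiv_X_of_ne hij.symm,
      pderiv_pderiv_comm i j p, hij, if_false]
    ring

lemma sum_sum_X_mul_pderiv_pderiv {R σ : Type*} [CommSemiring R] [Fintype σ] {k : ℕ}
    {p : MvPolynomial σ R} (hp : p.IsHomogeneous k) :
    ∑ i, ∑ j, MvPolynomial.X i * (MvPolynomial.X j * pderiv j (pderiv i p)) =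
      ((k - 1) * k) • p := by
  simp only [← Finset.mul_sum, hp.pderiv.sum_X_mul_pderiv, mul_smul_comm, ← Finset.smul_sum,
    hp.sum_X_mul_pderiv, mul_smul]

lemma polySphLap_of_isHomogeneous {k : ℕ} {p : MvPolynomial (Fin n) ℝ} (hp : p.IsHomogeneous k) :
    polySphLap p = (∑ i, MvPolynomial.X i ^ 2) * polyLap p - sphEigenvalue n k • p := by
  have hLap : ∑ i : Fin n, ∑ j : Fin n, MvPolynomial.X i ^ 2 * pderiv j (pderiv j p) =
      (∑ i, MvPolynomial.X i ^ 2) * polyLap p := by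
    rw [polyLap_apply, Finset.sum_mul_sum]
  have hLap' : ∑ i : Fin n, ∑ j : Fin n, MvPolynomial.X j ^ 2 * pderiv i (pderiv i p) =
      (∑ i, MvPolynomial.X i ^ 2) * polyLap p := by
    rw [← hLap, Finset.sum_comm]
  have hk : (((k - 1) * k : ℕ) : ℝ) = k * (k - 1) := by cases k <;> simp [mul_comm]
  rw [polySphLap_apply]
  simp only [rotDer_rotDer, Finset.sum_add_distrib, Finset.sum_sub_distrib, hLap, hLap',
    ← Finset.smul_sum, sum_sum_X_mul_pderiv_pderiv hp, hp.sum_X_mul_pderiv, Finset.sum_const,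
    Finset.card_univ, Fintype.card_fin, Finset.sum_ite_eq, Finset.mem_univ, if_true, two_mul]
  simp only [← Nat.cast_smul_eq_nsmul ℝ, hk, sphEigenvalue]
  module

lemma polyL2_sum_X_sq_mul (p : MvPolynomial (Fin n) ℝ) :
    polyL2 ((∑ i, MvPolynomial.X i ^ 2) * p) = polyL2 p := by
  refine toL2_congr fun x hx => ?_
  have hX : polyEval (∑ i, MvPolynomial.X i ^ 2) x = 1 := by
    simp [map_sum, coe_polyEval_X, ← EuclideanSpace.real_norm_sq_eq, hx]
  simp only [AlgHom.toLinearMap_apply, map_mul, ContinuousMap.mul_apply, hX, one_mul]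

lemma polyL2_polySphLap_of_isHomogeneous {k : ℕ} {p : MvPolynomial (Fin n) ℝ}
    (hp : p.IsHomogeneous k) :
    polyL2 (polySphLap p) = polyL2 (polyLap p) - sphEigenvalue n k • polyL2 p := by
  rw [polySphLap_of_isHomogeneous hp, map_sub, polyL2_sum_X_sq_mul, map_smul]

lemma polyL2_polySphLap_add_mem {N : ℕ} {p : MvPolynomial (Fin n) ℝ}
    (hp : p.totalDegree ≤ N + 1) :
    polyL2 (polySphLap p) + sphEigenvalue n (N + 1) • polyL2 p ∈ polySpace n N := by
  suffices h : ∀ k ≤ N + 1, ∀ q : MvPolynomial (Fin n) ℝ, q.IsHomogeneous k →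
      polyL2 (polySphLap q) + sphEigenvalue n (N + 1) • polyL2 q ∈ polySpace n N by
    rw [← p.sum_homogeneousComponent]
    simp only [map_sum, Finset.smul_sum, ← Finset.sum_add_distrib]
    exact Submodule.sum_mem _ fun k hk => h k (by grind) _
      (MvPolynomial.homogeneousComponent_isHomogeneous k p)
  intro k hk q hq
  have hlap := totalDegree_polyLap_le q
  have hdeg := hq.totalDegree_le
  rw [polyL2_polySphLap_of_isHomogeneous hq, sub_add, ← sub_smul]
  refine sub_mem (polyL2_mem_polySpace (by omega)) ?_
  rcases hk.eq_or_lt with rfl | hlt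
  · simp
  · exact Submodule.smul_mem _ _ (polyL2_mem_polySpace (by omega))

lemma polyL2_polySphLap_mem {N : ℕ} {p : MvPolynomial (Fin n) ℝ} (hp : p.totalDegree ≤ N) :
    polyL2 (polySphLap p) ∈ polySpace n N := by
  cases N with
  | zero =>
    rw [MvPolynomial.totalDegree_eq_zero_iff_eq_C.1 (Nat.le_zero.1 hp)]
    simp [polySphLap_apply, rotDer_apply]
  | succ N =>
    rw [← Submodule.add_mem_iff_left _ (Submodule.smul_mem _ _ (polyL2_mem_polySpace hp))]
    exact polySpace_mono N.le_succ (polyL2_polySphLap_add_mem hp)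

end SphericalLaplacian

section Green

variable {g h : E n → ℝ}

lemma inner_toL2_rot_polyL2 (hg : ContDiff ℝ 1 g) (i j : Fin n) (p : MvPolynomial (Fin n) ℝ) :
    ⟪toL2 ⟨rot i j g, continuous_rot hg i j⟩, polyL2 p⟫ =
      -⟪toL2 ⟨g, hg.continuous⟩, polyL2 (rotDer i j p)⟫ := by
  simp only [polyL2_apply, inner_toL2, ContinuousMap.coe_mk, ← rot_polyEval]
  exact integral_rot_mul hg (contDiff_polyEval p) i j

lemma integral_inner_sgrad (hg : ContDiff ℝ 1 g) (hh : ContDiff ℝ 1 h) :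
    ∫ x, ⟪sgrad g x, sgrad h x⟫ ∂sphMeasure n =
      2⁻¹ * ∑ i, ∑ j, ∫ x, rot i j g x * rot i j h x ∂sphMeasure n := by
  have hint (i j : Fin n) : Integrable (fun x => rot i j g x * rot i j h x) (sphMeasure n) :=
    integrable_sphMeasure ((continuous_rot hg i j).mul (continuous_rot hh i j))
  calc ∫ x, ⟪sgrad g x, sgrad h x⟫ ∂sphMeasure n
      = ∫ x, 2⁻¹ * ∑ i, ∑ j, rot i j g x * rot i j h x ∂sphMeasure n :=
        integral_congr_sphere fun x hx => by
          rw [sum_rot_mul_rot g h hx, inv_mul_cancel_left₀ two_ne_zero]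
    _ = _ := by
        rw [integral_const_mul, integral_finsetSum _ fun i _ => integrable_finsetSum _ fun j _ =>
          hint i j]
        simp only [integral_finsetSum _ fun j _ => hint _ j]

lemma integral_inner_sgrad_polyEval (hg : ContDiff ℝ 1 g) (p : MvPolynomial (Fin n) ℝ) :
    ∫ x, ⟪sgrad g x, sgrad (polyEval p) x⟫ ∂sphMeasure n =
      -⟪toL2 ⟨g, hg.continuous⟩, polyL2 (polySphLap p)⟫ := by
  have hrot (i j : Fin n) : ∫ x, rot i j g x * rot i j (polyEval p) x ∂sphMeasure n =
      -⟪toL2 ⟨g, hg.continuous⟩, polyL2 (rotDer i j (rotDer i j p))⟫ := by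
    rw [← inner_toL2_rot_polyL2 hg, polyL2_apply, inner_toL2, rot_polyEval]
    rfl
  rw [integral_inner_sgrad hg (contDiff_polyEval p)]
  simp only [hrot, polySphLap_apply, map_smul, map_sum, inner_smul_right, inner_sum,
    Finset.sum_neg_distrib, mul_neg]

lemma inner_polyL2_polySphLap (p q : MvPolynomial (Fin n) ℝ) :
    ⟪polyL2 (polySphLap p), polyL2 q⟫ = ⟪polyL2 p, polyL2 (polySphLap q)⟫ := by
  have hgreen (r s : MvPolynomial (Fin n) ℝ) :
      ∫ x, ⟪sgrad (polyEval r) x, sgrad (polyEval s) x⟫ ∂sphMeasure n =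
        -⟪polyL2 r, polyL2 (polySphLap s)⟫ := integral_inner_sgrad_polyEval (contDiff_polyEval r) s
  rw [real_inner_comm, ← neg_inj, ← hgreen, ← hgreen]
  simp only [real_inner_comm]

end Green

section Poincare

variable {M N : ℕ} {g : E n → ℝ} {p : MvPolynomial (Fin n) ℝ}

lemma inner_polyL2_polySphLap_of_mem_orthogonal (hp : p.totalDegree ≤ N + 1)
    (hpN : polyL2 p ∈ (polySpace n N)ᗮ) :
    ⟪polyL2 (polySphLap p), polyL2 p⟫ = -(sphEigenvalue n (N + 1) * ‖polyL2 p‖ ^ 2) := by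
  have horth := hpN _ (polyL2_polySphLap_add_mem hp)
  rw [inner_add_left, real_inner_smul_left, real_inner_self_eq_norm_sq] at horth
  exact eq_neg_of_add_eq_zero_left horth

lemma inner_polyL2_polySphLap_add {q w : MvPolynomial (Fin n) ℝ} (hq : q.totalDegree ≤ N)
    (hw : polyL2 w ∈ (polySpace n N)ᗮ) :
    ⟪polyL2 (polySphLap (q + w)), polyL2 (q + w)⟫ =
      ⟪polyL2 (polySphLap q), polyL2 q⟫ + ⟪polyL2 (polySphLap w), polyL2 w⟫ := by
  have hcross : ⟪polyL2 (polySphLap q), polyL2 w⟫ = 0 := hw _ (polyL2_polySphLap_mem hq)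
  have hcross' : ⟪polyL2 (polySphLap w), polyL2 q⟫ = 0 := by
    rw [inner_polyL2_polySphLap, real_inner_comm, hcross]
  simp only [map_add, inner_add_left, inner_add_right, hcross, hcross', add_zero, zero_add]

lemma exists_add_of_totalDegree_le_succ (hp : p.totalDegree ≤ N + 1) :
    ∃ q w : MvPolynomial (Fin n) ℝ, p = q + w ∧ q.totalDegree ≤ N ∧ w.totalDegree ≤ N + 1 ∧
      polyL2 w ∈ (polySpace n N)ᗮ := by
  obtain ⟨q, hq, hqp⟩ :=
    exists_of_mem_polySpace ((polySpace n N).starProjection_apply_mem (polyL2 p))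
  refine ⟨q, p - q, (add_sub_cancel q p).symm, hq, ?_, ?_⟩
  · exact (MvPolynomial.totalDegree_sub p q).trans (max_le hp (hq.trans N.le_succ))
  · rw [map_sub, hqp]
    exact (polySpace n N).sub_starProjection_mem_orthogonal _

lemma sphEigenvalue_mul_norm_sq_le (hp : p.totalDegree ≤ N)
    (hpM : polyL2 p ∈ (polySpace n M)ᗮ) :
    sphEigenvalue n (M + 1) * ‖polyL2 p‖ ^ 2 ≤ -⟪polyL2 (polySphLap p), polyL2 p⟫ := by
  have hlow {p : MvPolynomial (Fin n) ℝ} (hp : p.totalDegree ≤ M)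
      (hpM : polyL2 p ∈ (polySpace n M)ᗮ) :
      sphEigenvalue n (M + 1) * ‖polyL2 p‖ ^ 2 ≤ -⟪polyL2 (polySphLap p), polyL2 p⟫ := by
    have hzero : polyL2 p = 0 := inner_self_eq_zero.1 (hpM _ (polyL2_mem_polySpace hp))
    simp [hzero]
  induction N generalizing p with
  | zero => exact hlow (hp.trans M.zero_le) hpM
  | succ N ih =>
    rcases le_or_gt (N + 1) M with hNM | hMN
    · exact hlow (hp.trans hNM) hpM
    obtain ⟨q, w, rfl, hq, hw, hwN⟩ := exists_add_of_totalDegree_le_succ hp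
    have hwM : polyL2 w ∈ (polySpace n M)ᗮ :=
      Submodule.orthogonal_le (polySpace_mono (Nat.lt_succ_iff.1 hMN)) hwN
    have hqM : polyL2 q ∈ (polySpace n M)ᗮ := by
      rwa [map_add, Submodule.add_mem_iff_left _ hwM] at hpM
    have hpyth : ‖polyL2 (q + w)‖ ^ 2 = ‖polyL2 q‖ ^ 2 + ‖polyL2 w‖ ^ 2 := by
      rw [map_add, norm_add_sq_real, hwN _ (polyL2_mem_polySpace hq), mul_zero, add_zero]
    have hmono : sphEigenvalue n (M + 1) ≤ sphEigenvalue n (N + 1) :=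
      monotone_sphEigenvalue_succ (Nat.lt_succ_iff.1 hMN)
    have hmul := mul_le_mul_of_nonneg_right hmono (sq_nonneg ‖polyL2 w‖)
    rw [inner_polyL2_polySphLap_add hq hwN, inner_polyL2_polySphLap_of_mem_orthogonal hw hwN, hpyth]
    linarith [ih hq hqM]

lemma neg_inner_polySphLap_le_integral_sgrad (hg : ContDiff ℝ 1 g) (hp : p.totalDegree ≤ N)
    (hpg : polyL2 p = (polySpace n N).starProjection (toL2 ⟨g, hg.continuous⟩)) :
    -⟪polyL2 (polySphLap p), polyL2 p⟫ ≤ ∫ x, ‖sgrad g x‖ ^ 2 ∂sphMeasure n := by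
  have hcg := continuous_sgrad hg
  have hcp := continuous_sgrad (contDiff_polyEval p)
  have hgp : ∫ x, ⟪sgrad g x, sgrad (polyEval p) x⟫ ∂sphMeasure n =
      -⟪polyL2 (polySphLap p), polyL2 p⟫ := by
    rw [integral_inner_sgrad_polyEval hg, hpg, real_inner_comm,
      ← Submodule.inner_starProjection_left_eq_right,
      Submodule.starProjection_eq_self_iff.2 (polyL2_polySphLap_mem hp)]
  have hpp : ∫ x, ⟪sgrad (polyEval p) x, sgrad (polyEval p) x⟫ ∂sphMeasure n =
      -⟪polyL2 (polySphLap p), polyL2 p⟫ := by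
    rw [integral_inner_sgrad_polyEval (contDiff_polyEval p), real_inner_comm]
    rfl
  calc -⟪polyL2 (polySphLap p), polyL2 p⟫
      = ∫ x, (2 * ⟪sgrad g x, sgrad (polyEval p) x⟫
          - ⟪sgrad (polyEval p) x, sgrad (polyEval p) x⟫) ∂sphMeasure n := by
        rw [integral_sub (integrable_sphMeasure (by fun_prop))
          (integrable_sphMeasure (by fun_prop)), integral_const_mul, hgp, hpp]
        ring
    _ ≤ ∫ x, ‖sgrad g x‖ ^ 2 ∂sphMeasure n := by
        refine integral_mono (integrable_sphMeasure (by fun_prop))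
          (integrable_sphMeasure (by fun_prop)) fun x => ?_
        have hsq := norm_sub_sq_real (sgrad g x) (sgrad (polyEval p) x)
        rw [real_inner_self_eq_norm_sq]
        linarith [sq_nonneg ‖sgrad g x - sgrad (polyEval p) x‖]

lemma starProjection_mem_orthogonal {u : Lp ℝ 2 (sphMeasure n)} (hu : u ∈ (polySpace n M)ᗮ)
    (hMN : M ≤ N) : (polySpace n N).starProjection u ∈ (polySpace n M)ᗮ := fun v hv => by
  rw [← Submodule.inner_starProjection_left_eq_right,
    Submodule.starProjection_eq_self_iff.2 (polySpace_mono hMN hv), hu v hv]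

theorem sphEigenvalue_mul_integral_sq_le (hg : ContDiff ℝ 1 g)
    (hgM : toL2 ⟨g, hg.continuous⟩ ∈ (polySpace n M)ᗮ) :
    sphEigenvalue n (M + 1) * ∫ x, g x ^ 2 ∂sphMeasure n ≤
      ∫ x, ‖sgrad g x‖ ^ 2 ∂sphMeasure n := by
  have hnorm : ∫ x, g x ^ 2 ∂sphMeasure n = ‖toL2 ⟨g, hg.continuous⟩‖ ^ 2 := by
    rw [← real_inner_self_eq_norm_sq, inner_toL2]
    simp only [pow_two, ContinuousMap.coe_mk]
  rw [hnorm]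
  refine le_of_tendsto
    (((tendsto_starProjection_toL2 ⟨g, hg.continuous⟩).norm.pow 2).const_mul _) ?_
  filter_upwards [eventually_ge_atTop M] with N hMN
  obtain ⟨p, hp, hpg⟩ := exists_of_mem_polySpace
    ((polySpace n N).starProjection_apply_mem (toL2 ⟨g, hg.continuous⟩))
  rw [← hpg]
  exact (sphEigenvalue_mul_norm_sq_le hp (hpg ▸ starProjection_mem_orthogonal hgM hMN)).trans
    (neg_inner_polySphLap_le_integral_sgrad hg hp hpg)

end Poincare

section SecondOrder

variable {M : ℕ} {f g : E n → ℝ}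

lemma integral_norm_sgrad_sq (hg : ContDiff ℝ 1 g) :
    ∫ x, ‖sgrad g x‖ ^ 2 ∂sphMeasure n = 2⁻¹ * ∑ i, ∑ j, ∫ x, rot i j g x ^ 2 ∂sphMeasure n := by
  simpa only [real_inner_self_eq_norm_sq, ← pow_two] using integral_inner_sgrad hg hg

lemma integral_hsNormSq_sHess (hf : ContDiff ℝ 2 f) :
    ∫ x, hsNormSq (sHess f x) ∂sphMeasure n =
      2⁻¹ * ∑ i, ∑ j, ∫ x, ‖sgrad (rot i j f) x‖ ^ 2 ∂sphMeasure n -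
        ((n : ℝ) - 2) * ∫ x, ‖sgrad f x‖ ^ 2 ∂sphMeasure n := by
  have hcont (i j : Fin n) := continuous_sgrad (contDiff_rot hf one_add_one_eq_two.le i j)
  have hint (i j : Fin n) :
      Integrable (fun x => ‖sgrad (rot i j f) x‖ ^ 2) (sphMeasure n) :=
    integrable_sphMeasure ((hcont i j).norm.pow 2)
  have hcont' := continuous_sgrad (hf.of_le one_le_two)
  calc ∫ x, hsNormSq (sHess f x) ∂sphMeasure n
      = ∫ x, (2⁻¹ * ∑ i, ∑ j, ‖sgrad (rot i j f) x‖ ^ 2 - ((n : ℝ) - 2) * ‖sgrad f x‖ ^ 2)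
          ∂sphMeasure n :=
        integral_congr_sphere fun x hx => by
          rw [sum_norm_sgrad_rot_sq hf hx]
          ring
    _ = _ := by
        rw [integral_sub (integrable_sphMeasure (by fun_prop))
          (integrable_sphMeasure (by fun_prop)), integral_const_mul, integral_const_mul,
          integral_finsetSum _ fun i _ => integrable_finsetSum _ fun j _ => hint i j]
        simp only [integral_finsetSum _ fun j _ => hint _ j]

lemma mul_integral_norm_sgrad_sq_le (hf : ContDiff ℝ 2 f)
    (hM : ∀ i j, toL2 ⟨rot i j f, continuous_rot (hf.of_le one_le_two) i j⟩ ∈ (polySpace n M)ᗮ) :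
    (sphEigenvalue n (M + 1) - (n - 2)) * ∫ x, ‖sgrad f x‖ ^ 2 ∂sphMeasure n ≤
      ∫ x, hsNormSq (sHess f x) ∂sphMeasure n := by
  have hgap : sphEigenvalue n (M + 1) * ∑ i, ∑ j, ∫ x, rot i j f x ^ 2 ∂sphMeasure n ≤
      ∑ i, ∑ j, ∫ x, ‖sgrad (rot i j f) x‖ ^ 2 ∂sphMeasure n := by
    simp only [Finset.mul_sum]
    exact Finset.sum_le_sum fun i _ => Finset.sum_le_sum fun j _ =>
      sphEigenvalue_mul_integral_sq_le (contDiff_rot hf one_add_one_eq_two.le i j) (hM i j)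
  rw [integral_hsNormSq_sHess hf, sub_mul, integral_norm_sgrad_sq (hf.of_le one_le_two)]
  linarith

lemma toL2_rot_mem_orthogonal (hg : ContDiff ℝ 1 g) (i j : Fin n)
    (horth : ∀ p : MvPolynomial (Fin n) ℝ, p.totalDegree ≤ M →
      ⟪toL2 ⟨g, hg.continuous⟩, polyL2 (rotDer i j p)⟫ = 0) :
    toL2 ⟨rot i j g, continuous_rot hg i j⟩ ∈ (polySpace n M)ᗮ := by
  refine (Submodule.mem_orthogonal' _ _).2 fun u hu => ?_
  obtain ⟨p, hp, rfl⟩ := exists_of_mem_polySpace hu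
  rw [inner_toL2_rot_polyL2 hg, horth p hp, neg_zero]

lemma rotDer_eq_zero {p : MvPolynomial (Fin n) ℝ} (hp : p.totalDegree ≤ 0) (i j : Fin n) :
    rotDer i j p = 0 := by
  rw [MvPolynomial.totalDegree_eq_zero_iff_eq_C.1 (Nat.le_zero.1 hp)]
  simp

lemma exists_polyEval_rotDer_eq_inner {p : MvPolynomial (Fin n) ℝ} (hp : p.totalDegree ≤ 1)
    (i j : Fin n) : ∃ v : E n, ∀ x, polyEval (rotDer i j p) x = ⟪v, x⟫ := by
  have hconst (m : Fin n) : ∃ c, MvPolynomial.pderiv m p = MvPolynomial.C c :=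
    ⟨_, MvPolynomial.totalDegree_eq_zero_iff_eq_C.1 (Nat.le_zero.1
      ((totalDegree_pderiv_le m p).trans (Nat.sub_le_sub_right hp 1)))⟩
  choose v hv using hconst
  refine ⟨-rotGen i j (WithLp.toLp 2 v), fun x => ?_⟩
  rw [inner_neg_left, real_inner_comm, ← inner_rotGen_comm, inner_rotGen, rotDer_apply, hv, hv]
  simp [coe_polyEval_X]

lemma integral_norm_sgrad_sq_le (hf : ContDiff ℝ 2 f) :
    ∫ x, ‖sgrad f x‖ ^ 2 ∂sphMeasure n ≤ ∫ x, hsNormSq (sHess f x) ∂sphMeasure n := by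
  have hgap := mul_integral_norm_sgrad_sq_le (M := 0) hf fun i j =>
    toL2_rot_mem_orthogonal (hf.of_le one_le_two) i j fun p hp => by
      rw [rotDer_eq_zero hp, map_zero, inner_zero_right]
  have hcoeff : sphEigenvalue n (0 + 1) - (n - 2) = 1 := by
    simp only [sphEigenvalue]
    push_cast
    ring
  rwa [hcoeff, one_mul] at hgap

lemma mul_integral_norm_sgrad_sq_le_of_orthogonal (hf : ContDiff ℝ 2 f)
    (hlin : ∀ v : E n, ∫ x, ⟪v, x⟫ * f x ∂sphMeasure n = 0) :
    ((n : ℝ) + 2) * ∫ x, ‖sgrad f x‖ ^ 2 ∂sphMeasure n ≤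
      ∫ x, hsNormSq (sHess f x) ∂sphMeasure n := by
  have hgap := mul_integral_norm_sgrad_sq_le (M := 1) hf fun i j =>
    toL2_rot_mem_orthogonal (hf.of_le one_le_two) i j fun p hp => by
      obtain ⟨v, hv⟩ := exists_polyEval_rotDer_eq_inner hp i j
      rw [real_inner_comm, polyL2_apply, inner_toL2, ← hlin v]
      simp only [hv, ContinuousMap.coe_mk]
  have hcoeff : sphEigenvalue n (1 + 1) - (n - 2) = n + 2 := by
    simp only [sphEigenvalue]
    push_cast
    ring
  rwa [hcoeff] at hgap

end SecondOrder

section Localization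

variable {f g : E n → ℝ} {x : E n}

open scoped Manifold in
lemma exists_contDiff_eventuallyEq {F : Type*} [NormedAddCommGroup F] [NormedSpace ℝ F]
    [FiniteDimensional ℝ F] {k : ℕ∞} {f : F → ℝ} {U K : Set F} (hU : IsOpen U) (hK : IsClosed K)
    (hKU : K ⊆ U) (hf : ContDiffOn ℝ k f U) :
    ∃ g : F → ℝ, ContDiff ℝ k g ∧ ∀ x ∈ K, g =ᶠ[nhds x] f := by
  obtain ⟨χ, hχ0, hχ1, -⟩ := exists_contMDiffMap_zero_one_nhds_of_isClosed (n := k) 𝓘(ℝ, F)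
    hU.isClosed_compl hK (Set.disjoint_compl_left_iff_subset.2 hKU)
  have hχ : ContDiff ℝ k χ := χ.contMDiff.contDiff
  refine ⟨fun x => χ x * f x, contDiff_iff_contDiffAt.2 fun x => ?_, fun x hx => ?_⟩
  · by_cases hx : x ∈ U
    · exact hχ.contDiffAt.mul (hf.contDiffAt (hU.mem_nhds hx))
    · refine (contDiffAt_const (c := (0 : ℝ))).congr_of_eventuallyEq ?_
      filter_upwards [eventually_nhdsSet_iff_forall.1 hχ0 x hx] with y hy
      simp [hy]
  · filter_upwards [eventually_nhdsSet_iff_forall.1 hχ1 x hx] with y hy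
    simp [hy]

lemma sgrad_congr (h : g =ᶠ[nhds x] f) : sgrad g x = sgrad f x := by
  rw [sgrad, sgrad, h.gradient_eq]

lemma sHess_congr (h : g =ᶠ[nhds x] f) : sHess g x = sHess f x := by
  rw [sHess, sHess, h.gradient_eq, hess, hess, h.gradient.fderiv_eq]

end Localization

/-- **Proposition 5.1 (Statement 13).** Poincaré-type bounds for the spherical gradient
in terms of the spherical Hessian. -/
theorem sgrad_int_le_sHess_int
    {n : ℕ} (hn : 2 ≤ n) (f : E n → ℝ) (U : Set (E n)) (hU : IsOpen U)
    (hUS : Metric.sphere (0 : E n) 1 ⊆ U) (hf : ContDiffOn ℝ 2 f U) :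
    (∫ θ, ‖sgrad f θ‖ ^ 2 ∂sphMeasure n ≤ ∫ θ, hsNormSq (sHess f θ) ∂sphMeasure n) ∧
    ((∀ v : E n, ∫ θ, ⟪v, θ⟫ * f θ ∂sphMeasure n = 0) →
      ∫ θ, ‖sgrad f θ‖ ^ 2 ∂sphMeasure n ≤
        (1 / ((n : ℝ) + 2)) * ∫ θ, hsNormSq (sHess f θ) ∂sphMeasure n) := by
  obtain ⟨g, hg, hgf⟩ := exists_contDiff_eventuallyEq (k := 2) hU isClosed_sphere hUS hf
  have hmem {θ : E n} (hθ : ‖θ‖ = 1) : g =ᶠ[nhds θ] f := hgf θ (mem_sphere_zero_iff_norm.2 hθ)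
  have hgrad : ∫ θ, ‖sgrad f θ‖ ^ 2 ∂sphMeasure n = ∫ θ, ‖sgrad g θ‖ ^ 2 ∂sphMeasure n :=
    integral_congr_sphere fun θ hθ => by rw [sgrad_congr (hmem hθ)]
  have hHess : ∫ θ, hsNormSq (sHess f θ) ∂sphMeasure n =
      ∫ θ, hsNormSq (sHess g θ) ∂sphMeasure n :=
    integral_congr_sphere fun θ hθ => by rw [sHess_congr (hmem hθ)]
  rw [hgrad, hHess]
  refine ⟨integral_norm_sgrad_sq_le hg, fun hlin => ?_⟩
  rw [one_div_mul_eq_div, le_div_iff₀' (by positivity)]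
  refine mul_integral_norm_sgrad_sq_le_of_orthogonal hg fun v => ?_
  rw [← hlin v]
  exact integral_congr_sphere fun θ hθ => by rw [(hmem hθ).eq_of_nhds]

end SecondOrderConc
end
end

section
/- Let f be C²-smooth on an open neighbourhood of S^{n-1} whose restriction to S^{n-1} is orthogonal to all linear functions. Then ∫ |∇_S f|² dσ_{n-1} ≤ (1/(n−1)) ∫ ‖f''‖²_HS dσ_{n-1}, where f'' is the Euclidean Hessian. -/
open MeasureTheory Metric Filter
open scoped RealInnerProductSpace ENNReal NNReal

noncomputable section

namespace SecondOrderConc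

variable {n : ℕ}

/-!
For the standard Gaussian measure `γ` on `ℝⁿ`, a function `g` satisfies Stein's identity
`∫ g x • x ∂γ = ∫ ∇g ∂γ` and the Poincaré inequality `Var g ≤ ∫ |∇g|² ∂γ`; by tensorization (the
Efron–Stein inequality) both come from dimension one. The gradient of the `1`-homogeneous extension
of a function `h` on the sphere is the `0`-homogeneous field `h θ + ∇_S h`, so in polar coordinates
the two facts become `∫ ∇_S h ∂σ = (n - 1) ∫ h(θ) θ ∂σ` and `(n - 1) Var_σ h ≤ ∫ |∇_S h|² ∂σ`. The
radius only enters through `∫ |x|² ∂γ = n`.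

If `f` is orthogonal to the linear functions, the first of these gives `∫ ∇_S f ∂σ = 0`. With
`c = ∫ ∇f ∂σ`, the vector `∇_S f - (c - ⟨c, θ⟩ θ)` is the tangential part of `∇f - c`, hence
`∫ |∇_S f|² ∂σ ≤ ∫ |∇f - c|² ∂σ`, and the second one, applied to the components of `∇f`, bounds
the right-hand side by `(n - 1)⁻¹ ∫ ‖f''‖²_HS ∂σ`.
-/

section SphericalInequalities

open ProbabilityTheory Topology

section GaussianReal

variable {μ : ℝ} {v : ℝ≥0}

lemma hasDerivAt_gaussianPDFReal (hv : v ≠ 0) (x : ℝ) :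
    HasDerivAt (gaussianPDFReal μ v) (-((x - μ) / v) * gaussianPDFReal μ v x) x := by
  have hv' : (v : ℝ) ≠ 0 := NNReal.coe_ne_zero.2 hv
  have h := (((((hasDerivAt_id x).sub_const μ).pow 2).neg.div_const (2 * (v : ℝ))).exp).const_mul
    (√(2 * Real.pi * v))⁻¹
  refine h.congr_deriv ?_
  simp only [gaussianPDFReal, id, Pi.neg_apply, Pi.pow_apply]
  field_simp
  ring

lemma integrable_gaussianReal_iff (hv : v ≠ 0) {F : ℝ → ℝ} :
    Integrable F (gaussianReal μ v) ↔ Integrable fun x ↦ gaussianPDFReal μ v x * F x := by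
  rw [gaussianReal_of_var_ne_zero μ hv,
    integrable_withDensity_iff_integrable_smul' (measurable_gaussianPDF μ v)
      (ae_of_all _ fun _ ↦ gaussianPDF_lt_top)]
  simp only [toReal_gaussianPDF, smul_eq_mul]

theorem stein_identity_gaussianReal {g D : ℝ → ℝ} (hderiv : ∀ x, HasDerivAt g (D x) x)
    (hg : Integrable g (gaussianReal μ v)) (hD : Integrable D (gaussianReal μ v))
    (hxg : Integrable (fun x ↦ (x - μ) * g x) (gaussianReal μ v)) :
    ∫ x, (x - μ) * g x ∂gaussianReal μ v = v * ∫ x, D x ∂gaussianReal μ v := by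
  rcases eq_or_ne v 0 with rfl | hv
  · simp
  have hv' : (v : ℝ) ≠ 0 := NNReal.coe_ne_zero.2 hv
  have hderiv' (x : ℝ) : HasDerivAt (fun y ↦ gaussianPDFReal μ v y * g y)
      (gaussianPDFReal μ v x * (D x - (x - μ) * g x / v)) x :=
    ((hasDerivAt_gaussianPDFReal hv x).mul (hderiv x)).congr_deriv (by ring)
  have h0 := integral_eq_zero_of_hasDerivAt_of_integrable hderiv'
    ((integrable_gaussianReal_iff hv).1 (hD.sub (hxg.div_const v)))
    ((integrable_gaussianReal_iff hv).1 hg)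
  have h1 : ∫ x, (D x - (x - μ) * g x / v) ∂gaussianReal μ v = 0 := by
    rwa [integral_gaussianReal_eq_integral_smul hv]
  rw [integral_sub hD (hxg.div_const v), integral_div, sub_eq_zero] at h1
  rw [h1, mul_div_cancel₀ _ hv']

lemma memLp_dslope {ν : Measure ℝ} [IsFiniteMeasure ν] {g : ℝ → ℝ} {a : ℝ} {p : ℝ≥0∞}
    (hg : Differentiable ℝ g) (hgp : MemLp (fun x ↦ g x - g a) p ν) :
    MemLp (dslope g a) p ν := by
  have hcont : Continuous (dslope g a) := continuous_iff_continuousAt.2 fun x ↦ by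
    rcases eq_or_ne x a with rfl | hx
    · exact continuousAt_dslope_same.2 (hg x)
    · exact (continuousAt_dslope_of_ne hx).2 (hg x).continuousAt
  obtain ⟨C, hC⟩ := (isCompact_closedBall a 1).exists_bound_of_continuousOn hcont.continuousOn
  refine ((memLp_const C).norm.add hgp.norm).mono hcont.aestronglyMeasurable
    (ae_of_all _ fun x ↦ ?_)
  rw [Pi.add_apply, Real.norm_of_nonneg (by positivity : 0 ≤ ‖C‖ + ‖g x - g a‖)]
  by_cases hx : x ∈ closedBall a 1
  · exact ((hC x hx).trans (le_abs_self C)).trans (le_add_of_nonneg_right (norm_nonneg _))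
  · have h1 : 1 ≤ ‖x - a‖ := by simpa [dist_eq_norm] using (not_le.1 hx).le
    calc ‖dslope g a x‖ ≤ ‖x - a‖ * ‖dslope g a x‖ := le_mul_of_one_le_left (norm_nonneg _) h1
      _ = ‖g x - g a‖ := by rw [← sub_smul_dslope g a x, norm_smul]
      _ ≤ _ := le_add_of_nonneg_left (norm_nonneg _)

lemma hasDerivAt_sub_mul_dslope {g : ℝ → ℝ} {d a x : ℝ} (ha : DifferentiableAt ℝ g a)
    (hx : HasDerivAt g d x) :
    HasDerivAt (fun y ↦ (g y - g a) * dslope g a y)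
      (2 * (dslope g a x * d) - dslope g a x ^ 2) x := by
  rcases eq_or_ne x a with rfl | hxa
  · have hlim : Tendsto (fun y ↦ dslope g x y ^ 2) (𝓝[≠] x) (𝓝 (d ^ 2)) := by
      have h := (continuousAt_dslope_same.2 ha).tendsto.pow 2
      rw [dslope_same, hx.deriv] at h
      exact h.mono_left nhdsWithin_le_nhds
    rw [dslope_same, hx.deriv, show 2 * (d * d) - d ^ 2 = d ^ 2 by ring,
      hasDerivAt_iff_tendsto_slope]
    refine hlim.congr' (eventually_mem_nhdsWithin.mono fun y (hy : y ≠ x) ↦ ?_)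
    have hyx : y - x ≠ 0 := sub_ne_zero.2 hy
    rw [slope_def_field, dslope_of_ne _ hy, slope_def_field]
    field_simp
    simp
  · have hxa' : x - a ≠ 0 := sub_ne_zero.2 hxa
    have h := ((hx.sub_const (g a)).pow 2).div ((hasDerivAt_id x).sub_const a) hxa'
    refine (h.congr_of_eventuallyEq ((eventually_ne_nhds hxa).mono fun y hy ↦ ?_)).congr_deriv ?_
    · simp only [dslope_of_ne _ hy, slope_def_field, Pi.div_apply, Pi.pow_apply, id]
      ring
    · simp only [dslope_of_ne _ hxa, slope_def_field, Pi.pow_apply, id]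
      field_simp
      ring

-- Writing `g x - g μ = (x - μ) * q x`, Stein's identity for `(g - g μ) * q`, whose derivative is
-- `2 * q * D - q ^ 2 ≤ D ^ 2`, bounds the second moment of `g - g μ`.
theorem poincare_gaussianReal {g D : ℝ → ℝ} (hderiv : ∀ x, HasDerivAt g (D x) x)
    (hg : MemLp g 2 (gaussianReal μ v)) (hD : MemLp D 2 (gaussianReal μ v)) :
    Var[g; gaussianReal μ v] ≤ v * ∫ x, D x ^ 2 ∂gaussianReal μ v := by
  set q := dslope g μ
  have hgμ : MemLp (fun x ↦ g x - g μ) 2 (gaussianReal μ v) := hg.sub (memLp_const _)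
  have hq : MemLp q 2 (gaussianReal μ v) := memLp_dslope (fun x ↦ (hderiv x).differentiableAt) hgμ
  have hqD : Integrable (fun x ↦ 2 * (q x * D x) - q x ^ 2) (gaussianReal μ v) :=
    ((hq.integrable_mul hD).const_mul 2).sub hq.integrable_sq
  have hsq (x : ℝ) : (x - μ) * ((g x - g μ) * q x) = (g x - g μ) ^ 2 := by
    rw [← sub_smul_dslope g μ x, smul_eq_mul]
    ring
  calc Var[g; gaussianReal μ v]
      = Var[fun x ↦ g x - g μ; gaussianReal μ v] := (variance_sub_const hg.1 _).symm
    _ ≤ ∫ x, (g x - g μ) ^ 2 ∂gaussianReal μ v := variance_le_expectation_sq hgμ.1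
    _ = ∫ x, (x - μ) * ((g x - g μ) * q x) ∂gaussianReal μ v := by simp only [hsq]
    _ = v * ∫ x, (2 * (q x * D x) - q x ^ 2) ∂gaussianReal μ v :=
        stein_identity_gaussianReal
          (fun x ↦ hasDerivAt_sub_mul_dslope (hderiv μ).differentiableAt (hderiv x))
          (hgμ.integrable_mul hq) hqD (by simpa only [hsq] using hgμ.integrable_sq)
    _ ≤ v * ∫ x, D x ^ 2 ∂gaussianReal μ v :=
        mul_le_mul_of_nonneg_left
          (integral_mono hqD hD.integrable_sq fun x ↦ by linarith [sq_nonneg (q x - D x)]) v.2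

end GaussianReal

section Product

variable {α β : Type*} [MeasurableSpace α] [MeasurableSpace β] {μ : Measure α} {ν : Measure β}

lemma sq_integral_le_integral_sq [IsProbabilityMeasure μ] {X : α → ℝ} (hX : MemLp X 2 μ) :
    (∫ x, X x ∂μ) ^ 2 ≤ ∫ x, X x ^ 2 ∂μ :=
  sub_nonneg.1 ((variance_eq_sub hX).symm ▸ variance_nonneg X μ)

lemma ae_memLp_two_prodMk_left [SFinite μ] [SFinite ν] {g : α × β → ℝ} (hg : MemLp g 2 (μ.prod ν)) :
    ∀ᵐ x ∂μ, MemLp (fun y ↦ g (x, y)) 2 ν := by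
  filter_upwards [hg.1.prodMk_left, hg.integrable_sq.prod_right_ae] with x hmeas hsq
  exact (memLp_two_iff_integrable_sq hmeas).2 hsq

lemma memLp_two_integral_prod_left [SFinite μ] [IsProbabilityMeasure ν] {g : α × β → ℝ}
    (hg : MemLp g 2 (μ.prod ν)) : MemLp (fun x ↦ ∫ y, g (x, y) ∂ν) 2 μ := by
  have hm := hg.1.integral_prod_right'
  refine (memLp_two_iff_integrable_sq hm).2
    (hg.integrable_sq.integral_prod_left.mono' (hm.pow 2) ?_)
  filter_upwards [ae_memLp_two_prodMk_left hg] with x hx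
  rw [Real.norm_of_nonneg (sq_nonneg _)]
  exact sq_integral_le_integral_sq hx

lemma integral_sq_integral_le [SFinite μ] [IsProbabilityMeasure ν] {g : α × β → ℝ}
    (hg : MemLp g 2 (μ.prod ν)) :
    ∫ x, (∫ y, g (x, y) ∂ν) ^ 2 ∂μ ≤ ∫ p, g p ^ 2 ∂μ.prod ν := by
  rw [integral_prod _ hg.integrable_sq]
  refine integral_mono_ae (memLp_two_integral_prod_left hg).integrable_sq
    hg.integrable_sq.integral_prod_left ?_
  filter_upwards [ae_memLp_two_prodMk_left hg] with x hx
  exact sq_integral_le_integral_sq hx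

lemma ae_variance_prodMk_left_eq [SFinite μ] [IsProbabilityMeasure ν] {g : α × β → ℝ}
    (hg : MemLp g 2 (μ.prod ν)) :
    ∀ᵐ x ∂μ, Var[fun y ↦ g (x, y); ν] = ∫ y, g (x, y) ^ 2 ∂ν - (∫ y, g (x, y) ∂ν) ^ 2 := by
  filter_upwards [ae_memLp_two_prodMk_left hg] with x hx
  exact variance_eq_sub hx

lemma integrable_variance_prodMk_left [SFinite μ] [IsProbabilityMeasure ν] {g : α × β → ℝ}
    (hg : MemLp g 2 (μ.prod ν)) : Integrable (fun x ↦ Var[fun y ↦ g (x, y); ν]) μ :=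
  (hg.integrable_sq.integral_prod_left.sub (memLp_two_integral_prod_left hg).integrable_sq).congr
    ((ae_variance_prodMk_left_eq hg).mono fun _ h ↦ h.symm)

variable [IsProbabilityMeasure μ] [IsProbabilityMeasure ν] {g : α × β → ℝ}

theorem variance_prod_eq (hg : MemLp g 2 (μ.prod ν)) :
    Var[g; μ.prod ν] =
      ∫ x, Var[fun y ↦ g (x, y); ν] ∂μ + Var[fun x ↦ ∫ y, g (x, y) ∂ν; μ] := by
  have hm := memLp_two_integral_prod_left hg
  rw [variance_eq_sub hg, variance_eq_sub hm, integral_congr_ae (ae_variance_prodMk_left_eq hg),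
    integral_sub hg.integrable_sq.integral_prod_left hm.integrable_sq,
    ← integral_prod _ (hg.integrable one_le_two)]
  simp only [Pi.pow_apply]
  rw [integral_prod _ hg.integrable_sq]
  ring

theorem variance_integral_le (hg : MemLp g 2 (μ.prod ν)) :
    Var[fun x ↦ ∫ y, g (x, y) ∂ν; μ] ≤ ∫ y, Var[fun x ↦ g (x, y); μ] ∂ν := by
  have hswap : MemLp (fun p : β × α ↦ g (p.2, p.1)) 2 (ν.prod μ) :=
    hg.comp_measurePreserving Measure.measurePreserving_swap
  have hm := memLp_two_integral_prod_left hg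
  have hm' := memLp_two_integral_prod_left hswap
  set m : β → ℝ := fun y ↦ ∫ x, g (x, y) ∂μ
  have hk : MemLp (fun p ↦ g p - m p.2) 2 (μ.prod ν) := hg.sub (hm'.comp_snd μ)
  have hmean : ∫ x, ∫ y, g (x, y) ∂ν ∂μ = ∫ y, m y ∂ν :=
    integral_integral_swap (hg.integrable one_le_two)
  calc Var[fun x ↦ ∫ y, g (x, y) ∂ν; μ]
      = ∫ x, (∫ y, (g (x, y) - m y) ∂ν) ^ 2 ∂μ := by
        rw [variance_eq_integral hm.1.aemeasurable]
        refine integral_congr_ae ?_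
        filter_upwards [ae_memLp_two_prodMk_left hg] with x hx
        rw [hmean, integral_sub (hx.integrable one_le_two) (hm'.integrable one_le_two)]
    _ ≤ ∫ p, (g p - m p.2) ^ 2 ∂μ.prod ν := integral_sq_integral_le hk
    _ = ∫ y, Var[fun x ↦ g (x, y); μ] ∂ν := by
        rw [integral_prod_symm _ hk.integrable_sq]
        refine integral_congr_ae ?_
        filter_upwards [ae_memLp_two_prodMk_left hswap] with y hy
        rw [variance_eq_integral hy.1.aemeasurable]

theorem variance_prod_le (hg : MemLp g 2 (μ.prod ν)) :
    Var[g; μ.prod ν] ≤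
      ∫ y, Var[fun x ↦ g (x, y); μ] ∂ν + ∫ x, Var[fun y ↦ g (x, y); ν] ∂μ := by
  rw [variance_prod_eq hg, add_comm]
  gcongr
  exact variance_integral_le hg

end Product

section Update

variable {ι : Type*} [Fintype ι] [DecidableEq ι] {X : ι → Type*} [∀ i, MeasurableSpace (X i)]

lemma measurePreserving_update (μ : ∀ i, Measure (X i)) [∀ i, IsProbabilityMeasure (μ i)] (i : ι) :
    MeasurePreserving (fun p : (∀ j, X j) × X i ↦ Function.update p.1 i p.2)
      ((Measure.pi μ).prod (μ i)) (Measure.pi μ) := by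
  refine ⟨measurable_update', (Measure.pi_eq fun s hs ↦ ?_).symm⟩
  have hpre : (fun p : (∀ j, X j) × X i ↦ Function.update p.1 i p.2) ⁻¹' Set.univ.pi s =
      Set.univ.pi (Function.update s i Set.univ) ×ˢ s i := by
    ext p
    have hs := Function.forall_update_iff p.1 (a := i) (b := p.2) fun j y ↦ y ∈ s j
    have hp := Function.forall_update_iff s (a := i) (b := Set.univ) fun j t ↦ p.1 j ∈ t
    simp only [Set.mem_preimage, Set.mem_prod, Set.mem_univ_pi, hs, hp, Set.mem_univ, true_and,
      and_comm]
  rw [Measure.map_apply measurable_update' (.univ_pi hs), hpre, Measure.prod_prod, Measure.pi_pi,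
    ← Finset.mul_prod_erase _ _ (Finset.mem_univ i), mul_comm,
    ← Finset.mul_prod_erase _ _ (Finset.mem_univ i), Function.update_self, measure_univ, one_mul]
  congr 1
  refine Finset.prod_congr rfl fun j hj ↦ ?_
  rw [Function.update_of_ne (Finset.ne_of_mem_erase hj)]

variable {μ : ∀ i, Measure (X i)} [∀ i, IsProbabilityMeasure (μ i)] {g : (∀ i, X i) → ℝ}

lemma ae_memLp_two_update (hg : MemLp g 2 (Measure.pi μ)) (i : ι) :
    ∀ᵐ x ∂Measure.pi μ, MemLp (fun t ↦ g (Function.update x i t)) 2 (μ i) :=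
  ae_memLp_two_prodMk_left (g := fun p ↦ g (Function.update p.1 i p.2))
    (hg.comp_measurePreserving (measurePreserving_update μ i))

lemma integrable_variance_update (hg : MemLp g 2 (Measure.pi μ)) (i : ι) :
    Integrable (fun x ↦ Var[fun t ↦ g (Function.update x i t); μ i]) (Measure.pi μ) :=
  integrable_variance_prodMk_left (g := fun p ↦ g (Function.update p.1 i p.2))
    (hg.comp_measurePreserving (measurePreserving_update μ i))

lemma integrable_integral_update (hg : Integrable g (Measure.pi μ)) (i : ι) :
    Integrable (fun x ↦ ∫ t, g (Function.update x i t) ∂μ i) (Measure.pi μ) :=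
  ((measurePreserving_update μ i).integrable_comp_of_integrable hg).integral_prod_left

lemma integral_integral_update (hg : Integrable g (Measure.pi μ)) (i : ι) :
    ∫ x, ∫ t, g (Function.update x i t) ∂μ i ∂Measure.pi μ = ∫ x, g x ∂Measure.pi μ := by
  have hp := measurePreserving_update μ i
  rw [← integral_prod (fun p : (∀ j, X j) × X i ↦ g (Function.update p.1 i p.2))
      (hp.integrable_comp_of_integrable hg)]
  conv_rhs => rw [← hp.map_eq]
  rw [integral_map hp.measurable.aemeasurable (hp.map_eq.symm ▸ hg.1)]

end Update

section EfronStein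

lemma measurePreserving_finCons {X : Fin (n + 1) → Type*} [∀ i, MeasurableSpace (X i)]
    (μ : ∀ i, Measure (X i)) [∀ i, SigmaFinite (μ i)] :
    MeasurePreserving (fun p : X 0 × (∀ i : Fin n, X i.succ) ↦ (Fin.cons p.1 p.2 : ∀ i, X i))
      ((μ 0).prod (Measure.pi fun i : Fin n ↦ μ i.succ)) (Measure.pi μ) := by
  have hequiv := (measurePreserving_piFinSuccAbove μ 0).symm
  simp only [MeasurableEquiv.piFinSuccAbove, Fin.insertNthEquiv_zero] at hequiv
  exact hequiv

lemma integral_pi_fin_succ {X : Fin (n + 1) → Type*} [∀ i, MeasurableSpace (X i)]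
    {μ : ∀ i, Measure (X i)} [∀ i, SigmaFinite (μ i)] {F : (∀ i, X i) → ℝ}
    (hF : Integrable F (Measure.pi μ)) :
    ∫ x, F x ∂Measure.pi μ =
      ∫ s, ∫ y, F (Fin.cons s y) ∂Measure.pi (fun i : Fin n ↦ μ i.succ) ∂μ 0 := by
  have hp := measurePreserving_finCons μ
  rw [← integral_prod (fun p : X 0 × (∀ i : Fin n, X i.succ) ↦ F (Fin.cons p.1 p.2))
      (hp.integrable_comp_of_integrable hF),
    ← hp.map_eq, integral_map hp.measurable.aemeasurable (hp.map_eq.symm ▸ hF.1)]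

theorem efron_stein {X : Fin n → Type*} [∀ i, MeasurableSpace (X i)] {μ : ∀ i, Measure (X i)}
    [∀ i, IsProbabilityMeasure (μ i)] {g : (∀ i, X i) → ℝ} (hg : MemLp g 2 (Measure.pi μ)) :
    Var[g; Measure.pi μ] ≤
      ∑ i, ∫ x, Var[fun t ↦ g (Function.update x i t); μ i] ∂Measure.pi μ := by
  induction n with
  | zero => rw [Measure.pi_of_empty μ]; simp
  | succ n ih =>
    have hp := measurePreserving_finCons μ
    have hg' : MemLp (fun p : X 0 × (∀ i : Fin n, X i.succ) ↦ g (Fin.cons p.1 p.2)) 2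
      ((μ 0).prod (Measure.pi fun i : Fin n ↦ μ i.succ)) := hg.comp_measurePreserving hp
    have hsucc (i : Fin n) : Integrable
        (fun s ↦ ∫ y, Var[fun t ↦ g (Fin.cons s (Function.update y i t)); μ i.succ]
          ∂Measure.pi (fun j : Fin n ↦ μ j.succ)) (μ 0) := by
      have h := hp.integrable_comp_of_integrable (integrable_variance_update hg i.succ)
      simpa only [Function.comp_def, Fin.cons_update] using h.integral_prod_left
    have hvar := integrable_variance_prodMk_left hg'
    rw [← hp.variance_fun_comp hg.1.aemeasurable, Fin.sum_univ_succ]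
    simp only [integral_pi_fin_succ (integrable_variance_update hg _), Fin.update_cons_zero,
      ← Fin.cons_update, integral_const, probReal_univ, one_smul]
    refine (variance_prod_le hg').trans ?_
    gcongr
    rw [← integral_finsetSum _ fun i _ ↦ hsucc i]
    refine integral_mono_ae hvar (integrable_finsetSum _ fun i _ ↦ hsucc i) ?_
    filter_upwards [ae_memLp_two_prodMk_left hg'] with s hs using ih hs

end EfronStein

section PiGaussian

theorem stein_identity_pi_gaussianReal {ι : Type*} [Fintype ι] [DecidableEq ι] {m : ι → ℝ}
    {v : ι → ℝ≥0} {g D : (ι → ℝ) → ℝ} {i : ι}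
    (hderiv : ∀ᵐ x ∂Measure.pi fun j ↦ gaussianReal (m j) (v j),
      ∀ t, HasDerivAt (fun s ↦ g (Function.update x i s)) (D (Function.update x i t)) t)
    (hg : MemLp g 2 (Measure.pi fun j ↦ gaussianReal (m j) (v j)))
    (hD : MemLp D 2 (Measure.pi fun j ↦ gaussianReal (m j) (v j))) :
    ∫ x, (x i - m i) * g x ∂Measure.pi (fun j ↦ gaussianReal (m j) (v j)) =
      v i * ∫ x, D x ∂Measure.pi (fun j ↦ gaussianReal (m j) (v j)) := by
  have hsub : MemLp (fun t ↦ t - m i) 2 (gaussianReal (m i) (v i)) :=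
    (memLp_id_gaussianReal 2).sub (memLp_const _)
  have hxg : Integrable (fun x ↦ (x i - m i) * g x)
      (Measure.pi fun j ↦ gaussianReal (m j) (v j)) :=
    (hsub.comp_measurePreserving (measurePreserving_eval _ i)).integrable_mul hg
  rw [← integral_integral_update hxg i, ← integral_integral_update (hD.integrable one_le_two) i,
    ← integral_const_mul]
  refine integral_congr_ae ?_
  filter_upwards [hderiv, ae_memLp_two_update hg i, ae_memLp_two_update hD i] with x hx hgx hDx
  simpa using stein_identity_gaussianReal hx (hgx.integrable one_le_two)
    (hDx.integrable one_le_two) (hsub.integrable_mul hgx)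

theorem poincare_pi_gaussianReal {m : Fin n → ℝ} {v : Fin n → ℝ≥0}
    {g : (Fin n → ℝ) → ℝ} {D : Fin n → (Fin n → ℝ) → ℝ}
    (hderiv : ∀ i, ∀ᵐ x ∂Measure.pi fun j ↦ gaussianReal (m j) (v j),
      ∀ t, HasDerivAt (fun s ↦ g (Function.update x i s)) (D i (Function.update x i t)) t)
    (hg : MemLp g 2 (Measure.pi fun j ↦ gaussianReal (m j) (v j)))
    (hD : ∀ i, MemLp (D i) 2 (Measure.pi fun j ↦ gaussianReal (m j) (v j))) :
    Var[g; Measure.pi fun j ↦ gaussianReal (m j) (v j)] ≤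
      ∑ i, v i * ∫ x, D i x ^ 2 ∂Measure.pi (fun j ↦ gaussianReal (m j) (v j)) := by
  refine (efron_stein hg).trans (Finset.sum_le_sum fun i _ ↦ ?_)
  rw [← integral_integral_update (hD i).integrable_sq i, ← integral_const_mul]
  refine integral_mono_ae (integrable_variance_update hg i)
    ((integrable_integral_update (hD i).integrable_sq i).const_mul _) ?_
  filter_upwards [hderiv i, ae_memLp_two_update hg i, ae_memLp_two_update (hD i) i]
    with x hx hgx hDx
  exact poincare_gaussianReal hx hgx hDx

end PiGaussian

section StdGaussian

lemma integral_norm_sq_stdGaussian (V : Type*) [NormedAddCommGroup V] [InnerProductSpace ℝ V]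
    [FiniteDimensional ℝ V] [MeasurableSpace V] [BorelSpace V] :
    ∫ x, ‖x‖ ^ 2 ∂stdGaussian V = Module.finrank ℝ V := by
  let b := stdOrthonormalBasis ℝ V
  have hL (i) : MemLp (innerSL ℝ (b i)) 2 (stdGaussian V) :=
    IsGaussian.memLp_dual _ _ _ (by simp)
  have hvar (i) : ∫ x, (innerSL ℝ (b i) x) ^ 2 ∂stdGaussian V = 1 := by
    rw [← variance_of_integral_eq_zero (hL i).aestronglyMeasurable.aemeasurable
      (integral_strongDual_stdGaussian _), variance_dual_stdGaussian]
    simp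
  calc ∫ x, ‖x‖ ^ 2 ∂stdGaussian V = ∫ x, ∑ i, (innerSL ℝ (b i) x) ^ 2 ∂stdGaussian V := by
        simp [← b.sum_sq_norm_inner_right]
    _ = Module.finrank ℝ V := by
        rw [integral_finsetSum _ fun i _ ↦ (hL i).integrable_sq]
        simp only [hvar, Finset.sum_const, Finset.card_univ, Fintype.card_fin, nsmul_one]

lemma measurePreserving_toLp_stdGaussian (n : ℕ) :
    MeasurePreserving (WithLp.toLp 2 : (Fin n → ℝ) → E n)
      (Measure.pi fun _ ↦ gaussianReal 0 1) (stdGaussian (E n)) :=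
  ⟨by fun_prop, map_pi_eq_stdGaussian⟩

lemma integral_toLp_pi_gaussianReal (F : E n → ℝ) :
    ∫ x, F (WithLp.toLp 2 x) ∂Measure.pi (fun _ : Fin n ↦ gaussianReal 0 1) =
      ∫ x, F x ∂stdGaussian (E n) :=
  (measurePreserving_toLp_stdGaussian n).integral_comp
    (MeasurableEquiv.toLp 2 (Fin n → ℝ)).measurableEmbedding F

variable [n.AtLeastTwo] {g : E n → ℝ} {G : E n → E n}

-- In dimension at least two, almost every line parallel to an axis avoids the origin.
lemma ae_forall_hasDerivAt_update (hgrad : ∀ x ≠ 0, HasGradientAt g (G x) x) (i : Fin n) :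
    ∀ᵐ x ∂Measure.pi fun _ : Fin n ↦ gaussianReal 0 1, ∀ t,
      HasDerivAt (fun s ↦ g (WithLp.toLp 2 (Function.update x i s)))
        (G (WithLp.toLp 2 (Function.update x i t)) i) t := by
  have : NullSingletonClass (gaussianReal 0 1) := nullSingletonClass_gaussianReal one_ne_zero
  obtain ⟨j, hji⟩ := exists_ne i
  filter_upwards [(measurePreserving_eval (fun _ : Fin n ↦ gaussianReal 0 1) j)
    |>.quasiMeasurePreserving.ae (Measure.ae_ne _ 0)] with x (hx : x j ≠ 0) t
  have hne : (WithLp.toLp 2 (Function.update x i t) : E n) ≠ 0 := fun h0 ↦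
    hx (by simpa [hji] using congrArg (fun y : E n ↦ y j) h0)
  have hline : HasDerivAt (fun s ↦ (WithLp.toLp 2 (Function.update x i s) : E n))
      (EuclideanSpace.single i 1) t :=
    (PiLp.continuousLinearEquiv 2 ℝ fun _ : Fin n ↦ ℝ).symm.hasFDerivAt.comp_hasDerivAt t
      (hasDerivAt_update x i t)
  refine ((hgrad _ hne).hasFDerivAt.comp_hasDerivAt t hline).congr_deriv ?_
  simp [EuclideanSpace.inner_single_right]

theorem stein_identity_stdGaussian (hgrad : ∀ x ≠ 0, HasGradientAt g (G x) x)
    (hg : MemLp g 2 (stdGaussian (E n))) (hG : MemLp G 2 (stdGaussian (E n))) :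
    ∫ x, g x • x ∂stdGaussian (E n) = ∫ x, G x ∂stdGaussian (E n) := by
  have hmp := measurePreserving_toLp_stdGaussian n
  have hgx : Integrable (fun x ↦ g x • x) (stdGaussian (E n)) :=
    memLp_one_iff_integrable.1 (IsGaussian.memLp_two_id.smul hg)
  ext i
  rw [eval_integral_piLp hgx.eval_piLp, eval_integral_piLp (hG.integrable one_le_two).eval_piLp,
    ← integral_toLp_pi_gaussianReal, ← integral_toLp_pi_gaussianReal fun x ↦ G x i]
  simpa [mul_comm] using stein_identity_pi_gaussianReal (ae_forall_hasDerivAt_update hgrad i)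
    (hg.comp_measurePreserving hmp) ((hG.eval_piLp i).comp_measurePreserving hmp)

theorem poincare_stdGaussian (hgrad : ∀ x ≠ 0, HasGradientAt g (G x) x)
    (hg : MemLp g 2 (stdGaussian (E n))) (hG : MemLp G 2 (stdGaussian (E n))) :
    Var[g; stdGaussian (E n)] ≤ ∫ x, ‖G x‖ ^ 2 ∂stdGaussian (E n) := by
  have hmp := measurePreserving_toLp_stdGaussian n
  rw [← hmp.variance_fun_comp hg.1.aemeasurable]
  refine (poincare_pi_gaussianReal (ae_forall_hasDerivAt_update hgrad)
    (hg.comp_measurePreserving hmp)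
    fun i ↦ (hG.eval_piLp i).comp_measurePreserving hmp).trans_eq ?_
  simp only [NNReal.coe_one, one_mul, Function.comp_apply, EuclideanSpace.real_norm_sq_eq]
  rw [integral_finsetSum _ fun i _ ↦ (hG.eval_piLp i).integrable_sq]
  exact Finset.sum_congr rfl fun i _ ↦ integral_toLp_pi_gaussianReal fun x ↦ G x i ^ 2

end StdGaussian

section RadialDensity

lemma pi_gaussianReal_eq_withDensity {ι : Type*} [Fintype ι] (m : ι → ℝ) {v : ι → ℝ≥0}
    (hv : ∀ i, v i ≠ 0) :
    Measure.pi (fun i ↦ gaussianReal (m i) (v i)) =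
      volume.withDensity fun x ↦ ENNReal.ofReal (∏ i, gaussianPDFReal (m i) (v i) (x i)) := by
  refine Measure.pi_eq fun s hs ↦ ?_
  rw [withDensity_apply _ (.univ_pi hs), volume_pi, Measure.restrict_pi_pi,
    ← ofReal_integral_eq_lintegral_ofReal
      (Integrable.fintype_prod fun i ↦ (integrable_gaussianPDFReal _ _).restrict)
      (ae_of_all _ fun x ↦ Finset.prod_nonneg fun i _ ↦ gaussianPDFReal_nonneg _ _ _),
    integral_fintype_prod_eq_prod,
    ENNReal.ofReal_prod_of_nonneg fun i _ ↦ integral_nonneg (gaussianPDFReal_nonneg _ _)]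
  exact Finset.prod_congr rfl fun i _ ↦ (gaussianReal_apply_eq_integral _ (hv i) _).symm

/-- The density of the standard Gaussian measure on `ℝⁿ`, as a function of the norm. -/
def gaussianRadialPDF (n : ℕ) (r : ℝ) : ℝ := (√(2 * Real.pi))⁻¹ ^ n * Real.exp (-r ^ 2 / 2)

lemma continuous_gaussianRadialPDF (n : ℕ) : Continuous (gaussianRadialPDF n) := by
  unfold gaussianRadialPDF
  fun_prop

lemma gaussianRadialPDF_nonneg (n : ℕ) (r : ℝ) : 0 ≤ gaussianRadialPDF n r := by
  unfold gaussianRadialPDF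
  positivity

lemma prod_gaussianPDFReal (x : Fin n → ℝ) :
    ∏ i, gaussianPDFReal 0 1 (x i) = gaussianRadialPDF n ‖(WithLp.toLp 2 x : E n)‖ := by
  simp only [gaussianPDFReal, gaussianRadialPDF, EuclideanSpace.norm_sq_eq,
    Finset.prod_mul_distrib, ← Real.exp_sum]
  simp [← Finset.sum_div]

lemma stdGaussian_eq_withDensity (n : ℕ) :
    stdGaussian (E n) = volume.withDensity fun x ↦ ENNReal.ofReal (gaussianRadialPDF n ‖x‖) := by
  have hemb := (MeasurableEquiv.toLp 2 (Fin n → ℝ)).measurableEmbedding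
  ext s hs
  rw [← map_pi_eq_stdGaussian, pi_gaussianReal_eq_withDensity _ fun _ ↦ one_ne_zero,
    Measure.map_apply (by fun_prop) hs, withDensity_apply _ (hs.preimage (by fun_prop)),
    withDensity_apply _ hs,
    ← (PiLp.volume_preserving_toLp (Fin n)).setLIntegral_comp_preimage_emb hemb]
  simp only [prod_gaussianPDFReal]

lemma integral_stdGaussian_eq {V : Type*} [NormedAddCommGroup V] [NormedSpace ℝ V]
    (F : E n → V) :
    ∫ x, F x ∂stdGaussian (E n) = ∫ x, gaussianRadialPDF n ‖x‖ • F x := by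
  have hmeas := (continuous_gaussianRadialPDF n).measurable
  rw [stdGaussian_eq_withDensity, integral_withDensity_eq_integral_toReal_smul (by fun_prop)
    (ae_of_all _ fun _ ↦ ENNReal.ofReal_lt_top)]
  simp only [ENNReal.toReal_ofReal (gaussianRadialPDF_nonneg _ _)]

lemma ae_ne_zero_stdGaussian (n : ℕ) [NeZero n] : ∀ᵐ x ∂stdGaussian (E n), x ≠ 0 := by
  rw [stdGaussian_eq_withDensity]
  exact (withDensity_absolutelyContinuous _ _).ae_le (Measure.ae_ne _ 0)

end RadialDensity

section Polar

lemma integral_norm_smul_toSphere {V F : Type*} [NormedAddCommGroup V] [NormedSpace ℝ V]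
    [FiniteDimensional ℝ V] [MeasurableSpace V] [BorelSpace V] [Nontrivial V] (μ : Measure V)
    [μ.IsAddHaarMeasure] [NormedAddCommGroup F] [NormedSpace ℝ F] (u : ℝ → ℝ) (h : V → F) :
    ∫ x, u ‖x‖ • h (‖x‖⁻¹ • x) ∂μ =
      (∫ r, u r ∂Measure.volumeIoiPow (Module.finrank ℝ V - 1)) • ∫ θ, h θ ∂μ.toSphere := by
  calc ∫ x, u ‖x‖ • h (‖x‖⁻¹ • x) ∂μ
      = ∫ x : ({0}ᶜ : Set V), u ‖x.1‖ • h (‖x.1‖⁻¹ • x.1) ∂μ.comap Subtype.val := by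
        rw [integral_subtype_comap (measurableSet_singleton _).compl
          fun x ↦ u ‖x‖ • h (‖x‖⁻¹ • x), restrict_compl_singleton]
    _ = ∫ p, u p.2 • h p.1 ∂μ.toSphere.prod (.volumeIoiPow (Module.finrank ℝ V - 1)) := by
        rw [← μ.measurePreserving_homeomorphUnitSphereProd.integral_comp
          (Homeomorph.measurableEmbedding _)]
        simp
    _ = ∫ p, u p.1 • h p.2 ∂(Measure.volumeIoiPow (Module.finrank ℝ V - 1)).prod μ.toSphere :=
        (integral_prod_swap _).symm
    _ = _ := integral_prod_smul (fun r : Set.Ioi (0 : ℝ) ↦ u r) fun θ : sphere (0 : V) 1 ↦ h θ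

variable {F : Type*} [NormedAddCommGroup F] [NormedSpace ℝ F]

lemma integral_sphMeasure (h : E n → F) :
    ∫ θ, h θ ∂sphMeasure n = ((volume : Measure (E n)).toSphere.real Set.univ)⁻¹ •
      ∫ θ, h θ ∂(volume : Measure (E n)).toSphere := by
  have hval : MeasurableEmbedding (Subtype.val : sphere (0 : E n) 1 → E n) :=
    .subtype_coe isClosed_sphere.measurableSet
  rw [sphMeasure, integral_smul_measure, hval.integral_map, hval.map_apply]
  simp [Measure.real]

lemma ae_mem_sphere (n : ℕ) : ∀ᵐ θ ∂sphMeasure n, θ ∈ sphere (0 : E n) 1 := by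
  refine Measure.ae_smul_measure ?_ _
  exact (ae_map_iff (p := fun θ ↦ θ ∈ sphere (0 : E n) 1) measurable_subtype_coe.aemeasurable
    isClosed_sphere.measurableSet).2 (ae_of_all _ fun θ ↦ θ.2)

instance [NeZero n] : IsProbabilityMeasure (sphMeasure n) where
  measure_univ := by
    rw [sphMeasure, Measure.smul_apply, smul_eq_mul,
      Measure.map_apply measurable_subtype_coe .univ]
    exact ENNReal.inv_mul_cancel (Measure.measure_univ_ne_zero.2 (Measure.toSphere_ne_zero _))
      (measure_ne_top _ _)

theorem integral_norm_smul_stdGaussian [NeZero n] (u : ℝ → ℝ) (h : E n → F) :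
    ∫ x, u ‖x‖ • h (‖x‖⁻¹ • x) ∂stdGaussian (E n) =
      (∫ x, u ‖x‖ ∂stdGaussian (E n)) • ∫ θ, h θ ∂sphMeasure n := by
  have hpos : (volume : Measure (E n)).toSphere.real Set.univ ≠ 0 :=
    (measureReal_ne_zero_iff).2
      (Measure.measure_univ_ne_zero.2 (Measure.toSphere_ne_zero _))
  have hpolar := integral_norm_smul_toSphere (volume : Measure (E n))
    (fun r ↦ gaussianRadialPDF n r * u r) h
  have hradial := integral_norm_smul_toSphere (volume : Measure (E n))
    (fun r ↦ gaussianRadialPDF n r * u r) fun _ ↦ (1 : ℝ)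
  simp only [mul_smul, smul_eq_mul, mul_one, integral_const] at hpolar hradial
  rw [integral_stdGaussian_eq, integral_stdGaussian_eq, integral_sphMeasure, hpolar]
  simp only [smul_eq_mul, hradial]
  rw [smul_smul, mul_assoc, mul_inv_cancel₀ hpos, mul_one]

end Polar

section SphericalGradient

variable {h : E n → ℝ} {x θ : E n}

lemma sgrad_inner_self (hθ : ‖θ‖ = 1) : ⟪sgrad h θ, θ⟫ = 0 := by
  simp [sgrad, inner_sub_left, real_inner_smul_left, hθ]

lemma norm_sq_gradient (hθ : ‖θ‖ = 1) :
    ‖gradient h θ‖ ^ 2 = ‖sgrad h θ‖ ^ 2 + ⟪gradient h θ, θ⟫ ^ 2 := by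
  have hdecomp : gradient h θ = sgrad h θ + ⟪gradient h θ, θ⟫ • θ := by simp [sgrad]
  conv_lhs => rw [hdecomp, norm_add_sq_real, real_inner_smul_right, sgrad_inner_self hθ]
  simp [norm_smul, hθ]

lemma norm_sq_sgrad_le (hθ : ‖θ‖ = 1) : ‖sgrad h θ‖ ^ 2 ≤ ‖gradient h θ‖ ^ 2 := by
  rw [norm_sq_gradient hθ]
  exact le_add_of_nonneg_right (sq_nonneg _)

-- The components of `gradient h θ - c` tangent and normal to the sphere are orthogonal.
lemma norm_sq_sgrad_sub_le (hθ : ‖θ‖ = 1) (c : E n) :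
    ‖sgrad h θ‖ ^ 2 - 2 * ⟪sgrad h θ, c⟫ ≤ ‖gradient h θ - c‖ ^ 2 := by
  have hinner : ⟪sgrad h θ, c⟫ = ⟪gradient h θ, c⟫ - ⟪gradient h θ, θ⟫ * ⟪θ, c⟫ := by
    rw [sgrad, inner_sub_left, real_inner_smul_left]
  have hcs : ⟪θ, c⟫ ^ 2 ≤ ‖c‖ ^ 2 :=
    sq_le_sq.2 (by simpa [hθ] using abs_real_inner_le_norm θ c)
  rw [norm_sub_sq_real, norm_sq_gradient hθ, hinner]
  linarith [sq_nonneg (⟪gradient h θ, θ⟫ - ⟪θ, c⟫)]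

lemma gradient_sub_const (h : E n → ℝ) (c : ℝ) : gradient (fun x ↦ h x - c) = gradient h := by
  ext1 x
  simp only [gradient, fderiv_sub_const]

/-- The `1`-homogeneous extension to `ℝⁿ \ {0}` of the restriction of `h` to the sphere. -/
def ext1 (h : E n → ℝ) (x : E n) : ℝ := ‖x‖ * ext0 h x

/-- The gradient of `ext1 h` at a point `θ` of the sphere. -/
def ext1Grad (h : E n → ℝ) (θ : E n) : E n := h θ • θ + sgrad h θ

lemma norm_sq_ext1Grad (hθ : ‖θ‖ = 1) : ‖ext1Grad h θ‖ ^ 2 = h θ ^ 2 + ‖sgrad h θ‖ ^ 2 := by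
  rw [ext1Grad, norm_add_sq_real, real_inner_smul_left, real_inner_comm, sgrad_inner_self hθ,
    norm_smul, hθ]
  simp

lemma hasFDerivAt_norm_of_ne_zero {V : Type*} [NormedAddCommGroup V] [InnerProductSpace ℝ V]
    {x : V} (hx : x ≠ 0) : HasFDerivAt (fun y : V ↦ ‖y‖) (innerSL ℝ (‖x‖⁻¹ • x)) x := by
  have hsqrt := (hasStrictFDerivAt_norm_sq x).hasFDerivAt.sqrt (by simpa using hx)
  simp only [Real.sqrt_sq (norm_nonneg _)] at hsqrt
  refine hsqrt.congr_fderiv ?_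
  ext v
  simp only [one_div, mul_inv_rev, smul_apply, coe_innerSL_apply, nsmul_eq_mul, Nat.cast_ofNat,
    smul_eq_mul, map_smul]
  ring

lemma hasGradientAt_ext1 (hx : x ≠ 0) (hh : DifferentiableAt ℝ h (‖x‖⁻¹ • x)) :
    HasGradientAt (ext1 h) (ext1Grad h (‖x‖⁻¹ • x)) x := by
  have hx' : ‖x‖ ≠ 0 := norm_ne_zero_iff.2 hx
  have hnorm := hasFDerivAt_norm_of_ne_zero hx
  have hdir : HasFDerivAt (fun y ↦ ‖y‖⁻¹ • y) (‖x‖⁻¹ • ContinuousLinearMap.id ℝ (E n) +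
      (-(‖x‖ ^ 2)⁻¹ • innerSL ℝ (‖x‖⁻¹ • x)).smulRight x) x :=
    ((hasDerivAt_inv hx').comp_hasFDerivAt x hnorm).smul (hasFDerivAt_id x)
  have hext := hnorm.mul (hh.hasGradientAt.hasFDerivAt.comp x (f := fun y ↦ ‖y‖⁻¹ • y) hdir)
  rw [hasGradientAt_iff_hasFDerivAt]
  refine hext.congr_fderiv ?_
  ext v
  simp only [toDual_gradient, map_smul, neg_smul, ContinuousLinearMap.comp_add,
    ContinuousLinearMap.comp_smulₛₗ, map_inv₀, Real.ringHom_apply, ContinuousLinearMap.comp_id,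
    smul_add, Function.comp_apply, add_apply, smul_apply, smul_eq_mul,
    ContinuousLinearMap.comp_apply, ContinuousLinearMap.smulRight_apply, neg_apply,
    coe_innerSL_apply, map_neg, mul_neg, ext1Grad, sgrad, inner_gradient_left, map_add, map_sub,
    InnerProductSpace.toDual_apply_apply, sub_apply]
  field_simp
  ring

end SphericalGradient

section SphereRegularity

variable {F : Type*} [NormedAddCommGroup F]

lemma contDiffAt_gradient {V : Type*} [NormedAddCommGroup V] [InnerProductSpace ℝ V]
    [CompleteSpace V] {h : V → ℝ} {x : V} {k m : WithTop ℕ∞} (hh : ContDiffAt ℝ m h x)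
    (hkm : k + 1 ≤ m) : ContDiffAt ℝ k (gradient h) x :=
  (InnerProductSpace.toDual ℝ V).symm.contDiff.contDiffAt.comp x (hh.fderiv_right hkm)

lemma continuousOn_gradient {h : E n → ℝ} {s : Set (E n)} (hh : ∀ θ ∈ s, ContDiffAt ℝ 1 h θ) :
    ContinuousOn (gradient h) s := fun θ hθ ↦
  (contDiffAt_gradient (k := 0) (hh θ hθ) (by simp)).continuousAt.continuousWithinAt

lemma continuousOn_sgrad {h : E n → ℝ} {s : Set (E n)} (hh : ∀ θ ∈ s, ContDiffAt ℝ 1 h θ) :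
    ContinuousOn (sgrad h) s := by
  have hgrad := continuousOn_gradient hh
  unfold sgrad
  fun_prop

lemma continuousOn_of_forall_contDiffAt {V : Type*} [NormedAddCommGroup V] [NormedSpace ℝ V]
    [NormedSpace ℝ F] {h : V → F} {s : Set V} {m : WithTop ℕ∞}
    (hh : ∀ x ∈ s, ContDiffAt ℝ m h x) : ContinuousOn h s := fun x hx ↦
  (hh x hx).continuousAt.continuousWithinAt

lemma normalize_mem_sphere {V : Type*} [NormedAddCommGroup V] [NormedSpace ℝ V] {x : V}
    (hx : x ≠ 0) : ‖x‖⁻¹ • x ∈ sphere (0 : V) 1 := by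
  simp [norm_smul, norm_ne_zero_iff.2 hx]

variable [NeZero n] {h : E n → F}

lemma integrable_sphMeasure_s15 (hh : ContinuousOn h (sphere 0 1)) : Integrable h (sphMeasure n) := by
  rw [← Measure.restrict_eq_self_of_ae_mem (ae_mem_sphere n)]
  exact hh.integrableOn_compact (isCompact_sphere 0 1)

lemma memLp_comp_normalize (hh : ContinuousOn h (sphere 0 1)) (p : ℝ≥0∞) :
    MemLp (fun x ↦ h (‖x‖⁻¹ • x)) p (stdGaussian (E n)) := by
  have hmaps : Set.MapsTo (fun x : E n ↦ ‖x‖⁻¹ • x) {0}ᶜ (sphere 0 1) := fun x hx ↦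
    normalize_mem_sphere hx
  have hnormalize : ContinuousOn (fun x : E n ↦ ‖x‖⁻¹ • x) {0}ᶜ :=
    (continuousOn_id.norm.inv₀ fun x hx ↦ norm_ne_zero_iff.2 hx).smul continuousOn_id
  have hmeas : AEStronglyMeasurable (fun x ↦ h (‖x‖⁻¹ • x)) (stdGaussian (E n)) := by
    rw [← Measure.restrict_eq_self_of_ae_mem (ae_ne_zero_stdGaussian n)]
    exact (hh.comp hnormalize hmaps).aestronglyMeasurable (measurableSet_singleton 0).compl
  obtain ⟨C, hC⟩ := (isCompact_sphere (0 : E n) 1).exists_bound_of_continuousOn hh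
  exact .of_bound hmeas C ((ae_ne_zero_stdGaussian n).mono fun x hx ↦ hC _ (hmaps hx))

lemma memLp_ext1 {h : E n → ℝ} (hh : ContinuousOn h (sphere 0 1)) :
    MemLp (ext1 h) 2 (stdGaussian (E n)) :=
  (memLp_comp_normalize hh ∞).mul IsGaussian.memLp_two_id.norm

end SphereRegularity

section HomogeneousExtension

variable {h : E n → ℝ}

lemma hasGradientAt_ext1_of_contDiffAt_sphere (hh : ∀ θ ∈ sphere (0 : E n) 1, ContDiffAt ℝ 1 h θ)
    (x : E n) (hx : x ≠ 0) : HasGradientAt (ext1 h) (ext1Grad h (‖x‖⁻¹ • x)) x :=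
  hasGradientAt_ext1 hx ((hh _ (normalize_mem_sphere hx)).differentiableAt one_ne_zero)

variable [NeZero n]

lemma memLp_ext1Grad_normalize (hh : ∀ θ ∈ sphere (0 : E n) 1, ContDiffAt ℝ 1 h θ) :
    MemLp (fun x ↦ ext1Grad h (‖x‖⁻¹ • x)) 2 (stdGaussian (E n)) := by
  have hhc := continuousOn_of_forall_contDiffAt hh
  have hsc := continuousOn_sgrad hh
  exact memLp_comp_normalize (h := ext1Grad h) (by unfold ext1Grad; fun_prop) 2

lemma variance_ext1 (hh : ContinuousOn h (sphere 0 1)) (hmean : ∫ θ, h θ ∂sphMeasure n = 0) :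
    Var[ext1 h; stdGaussian (E n)] = n * ∫ θ, h θ ^ 2 ∂sphMeasure n := by
  have hmean' : ∫ x, ext1 h x ∂stdGaussian (E n) = 0 := by
    have hpolar := integral_norm_smul_stdGaussian (fun r ↦ r) h
    rwa [hmean, smul_zero] at hpolar
  rw [variance_of_integral_eq_zero (memLp_ext1 hh).1.aemeasurable hmean']
  have hpolar := integral_norm_smul_stdGaussian (fun r ↦ r ^ 2) fun θ : E n ↦ h θ ^ 2
  simpa [ext1, ext0, mul_pow, integral_norm_sq_stdGaussian] using hpolar

lemma integral_norm_sq_ext1Grad (hh : ∀ θ ∈ sphere (0 : E n) 1, ContDiffAt ℝ 1 h θ) :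
    ∫ θ, ‖ext1Grad h θ‖ ^ 2 ∂sphMeasure n =
      ∫ θ, h θ ^ 2 ∂sphMeasure n + ∫ θ, ‖sgrad h θ‖ ^ 2 ∂sphMeasure n := by
  have hsq : Integrable (fun θ ↦ h θ ^ 2) (sphMeasure n) :=
    integrable_sphMeasure_s15 ((continuousOn_of_forall_contDiffAt hh).pow 2)
  have hsgrad : Integrable (fun θ ↦ ‖sgrad h θ‖ ^ 2) (sphMeasure n) :=
    integrable_sphMeasure_s15 ((continuousOn_sgrad hh).norm.pow 2)
  rw [← integral_add hsq hsgrad]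
  exact integral_congr_ae ((ae_mem_sphere n).mono fun θ hθ ↦
    norm_sq_ext1Grad (mem_sphere_zero_iff_norm.1 hθ))

end HomogeneousExtension

section SpherePoincare

variable {h : E n → ℝ} {G : E n → E n}

lemma sum_norm_sq_gradient_apply {x : E n} (hG : DifferentiableAt ℝ G x) :
    ∑ i, ‖gradient (fun y ↦ G y i) x‖ ^ 2 = hsNormSq (fderiv ℝ G x) := by
  have happly (i j) : gradient (fun y ↦ G y i) x j =
      fderiv ℝ G x (EuclideanSpace.single j 1) i := by
    have hi := (EuclideanSpace.proj i : E n →L[ℝ] ℝ).hasFDerivAt.comp x hG.hasFDerivAt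
    calc gradient (fun y ↦ G y i) x j
        = ⟪gradient (fun y ↦ G y i) x, EuclideanSpace.single j 1⟫ := by
          rw [EuclideanSpace.inner_single_right, one_mul, conj_trivial]
      _ = fderiv ℝ G x (EuclideanSpace.single j 1) i := by
          rw [inner_gradient_left]
          exact congrArg (fun L : E n →L[ℝ] ℝ ↦ L (EuclideanSpace.single j 1)) hi.fderiv
  simp only [hsNormSq, EuclideanSpace.real_norm_sq_eq, happly]
  exact Finset.sum_comm

variable [n.AtLeastTwo]

lemma poincare_sphMeasure_of_integral_eq_zero
    (hh : ∀ θ ∈ sphere (0 : E n) 1, ContDiffAt ℝ 1 h θ) (hmean : ∫ θ, h θ ∂sphMeasure n = 0) :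
    (n - 1) * ∫ θ, h θ ^ 2 ∂sphMeasure n ≤ ∫ θ, ‖sgrad h θ‖ ^ 2 ∂sphMeasure n := by
  have hhc := continuousOn_of_forall_contDiffAt hh
  have hpoinc := poincare_stdGaussian (hasGradientAt_ext1_of_contDiffAt_sphere hh) (memLp_ext1 hhc)
    (memLp_ext1Grad_normalize hh)
  have hpolar := integral_norm_smul_stdGaussian (fun _ ↦ 1) fun θ : E n ↦ ‖ext1Grad h θ‖ ^ 2
  simp only [one_smul, integral_const, probReal_univ] at hpolar
  rw [variance_ext1 hhc hmean, hpolar, integral_norm_sq_ext1Grad hh] at hpoinc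
  linarith

theorem poincare_sphMeasure (hh : ∀ θ ∈ sphere (0 : E n) 1, ContDiffAt ℝ 1 h θ) :
    (n - 1) * Var[h; sphMeasure n] ≤ ∫ θ, ‖sgrad h θ‖ ^ 2 ∂sphMeasure n := by
  have hint := integrable_sphMeasure_s15 (continuousOn_of_forall_contDiffAt hh)
  rw [variance_eq_integral hint.1.aemeasurable]
  convert poincare_sphMeasure_of_integral_eq_zero
    (h := fun θ ↦ h θ - ∫ θ, h θ ∂sphMeasure n) (fun θ hθ ↦ (hh θ hθ).sub contDiffAt_const) ?_
    using 5
  · simp only [sgrad, gradient_sub_const]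
  · simp [integral_sub hint (integrable_const _)]

theorem poincare_sphMeasure_vectorField
    (hG : ∀ θ ∈ sphere (0 : E n) 1, ContDiffAt ℝ 1 G θ) :
    (n - 1) * ∫ θ, ‖G θ - ∫ η, G η ∂sphMeasure n‖ ^ 2 ∂sphMeasure n ≤
      ∫ θ, hsNormSq (fderiv ℝ G θ) ∂sphMeasure n := by
  have hGi (i) : ∀ θ ∈ sphere (0 : E n) 1, ContDiffAt ℝ 1 (fun y ↦ G y i) θ := fun θ hθ ↦
    (EuclideanSpace.proj i : E n →L[ℝ] ℝ).contDiff.contDiffAt.comp θ (hG θ hθ)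
  have hGc := continuousOn_of_forall_contDiffAt hG
  have hgrad (i) : Integrable (fun θ ↦ ‖gradient (fun y ↦ G y i) θ‖ ^ 2) (sphMeasure n) :=
    integrable_sphMeasure_s15 ((continuousOn_gradient (hGi i)).norm.pow 2)
  have hsgrad (i) : Integrable (fun θ ↦ ‖sgrad (fun y ↦ G y i) θ‖ ^ 2) (sphMeasure n) :=
    integrable_sphMeasure_s15 ((continuousOn_sgrad (hGi i)).norm.pow 2)
  have hmean (i) : (∫ η, G η ∂sphMeasure n) i = ∫ η, G η i ∂sphMeasure n :=
    eval_integral_piLp (integrable_sphMeasure_s15 hGc).eval_piLp i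
  calc (n - 1) * ∫ θ, ‖G θ - ∫ η, G η ∂sphMeasure n‖ ^ 2 ∂sphMeasure n
      = ∑ i, (n - 1) * Var[fun θ ↦ G θ i; sphMeasure n] := by
        simp only [EuclideanSpace.real_norm_sq_eq, PiLp.sub_apply, hmean]
        rw [integral_finsetSum _ fun i _ ↦ integrable_sphMeasure_s15 (by fun_prop), Finset.mul_sum]
        simp only [variance_eq_integral (integrable_sphMeasure_s15
          (continuousOn_of_forall_contDiffAt (hGi _))).1.aemeasurable]
    _ ≤ ∑ i, ∫ θ, ‖gradient (fun y ↦ G y i) θ‖ ^ 2 ∂sphMeasure n := by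
        gcongr with i
        exact (poincare_sphMeasure (hGi i)).trans <| integral_mono_ae (hsgrad i) (hgrad i) <|
          (ae_mem_sphere n).mono fun θ hθ ↦ norm_sq_sgrad_le (mem_sphere_zero_iff_norm.1 hθ)
    _ = ∫ θ, hsNormSq (fderiv ℝ G θ) ∂sphMeasure n := by
        rw [← integral_finsetSum _ fun i _ ↦ hgrad i]
        exact integral_congr_ae ((ae_mem_sphere n).mono fun θ hθ ↦
          sum_norm_sq_gradient_apply ((hG θ hθ).differentiableAt one_ne_zero))

end SpherePoincare

section MeanSphericalGradient

variable {f : E n → ℝ}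

theorem integral_sgrad [n.AtLeastTwo] (hf : ∀ θ ∈ sphere (0 : E n) 1, ContDiffAt ℝ 1 f θ) :
    ∫ θ, sgrad f θ ∂sphMeasure n = ((n : ℝ) - 1) • ∫ θ, f θ • θ ∂sphMeasure n := by
  have hfc := continuousOn_of_forall_contDiffAt hf
  have hstein := stein_identity_stdGaussian (hasGradientAt_ext1_of_contDiffAt_sphere hf)
    (memLp_ext1 hfc) (memLp_ext1Grad_normalize hf)
  have hleft : ∫ x, ext1 f x • x ∂stdGaussian (E n) = (n : ℝ) • ∫ θ, f θ • θ ∂sphMeasure n := by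
    have hpolar := integral_norm_smul_stdGaussian (fun r ↦ r ^ 2) fun θ : E n ↦ f θ • θ
    rw [integral_norm_sq_stdGaussian, finrank_euclideanSpace_fin] at hpolar
    rw [← hpolar]
    refine integral_congr_ae ((ae_ne_zero_stdGaussian n).mono fun x hx ↦ ?_)
    have hx' : ‖x‖ ≠ 0 := norm_ne_zero_iff.2 hx
    simp only [ext1, ext0, smul_smul]
    congr 1
    field_simp
  have hright : ∫ x, ext1Grad f (‖x‖⁻¹ • x) ∂stdGaussian (E n) =
      ∫ θ, f θ • θ ∂sphMeasure n + ∫ θ, sgrad f θ ∂sphMeasure n := by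
    have hpolar := integral_norm_smul_stdGaussian (fun _ ↦ 1) (ext1Grad f)
    simp only [one_smul, integral_const, probReal_univ] at hpolar
    rw [hpolar]
    exact integral_add (integrable_sphMeasure_s15 (by fun_prop))
      (integrable_sphMeasure_s15 (continuousOn_sgrad hf))
  rw [hleft, hright] at hstein
  rw [sub_smul, one_smul, hstein, add_sub_cancel_left]

lemma integral_smul_self_eq_zero [NeZero n] (hf : ContinuousOn f (sphere 0 1))
    (hlin : ∀ v : E n, ∫ θ, ⟪v, θ⟫ * f θ ∂sphMeasure n = 0) :
    ∫ θ, f θ • θ ∂sphMeasure n = 0 := by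
  refine ext_inner_left ℝ fun v ↦ ?_
  rw [← integral_inner (integrable_sphMeasure_s15 (by fun_prop)), inner_zero_right, ← hlin v]
  simp only [real_inner_smul_right, mul_comm]

lemma integral_norm_sq_sgrad_le [NeZero n] (hf : ∀ θ ∈ sphere (0 : E n) 1, ContDiffAt ℝ 1 f θ)
    (hmean : ∫ θ, sgrad f θ ∂sphMeasure n = 0) (c : E n) :
    ∫ θ, ‖sgrad f θ‖ ^ 2 ∂sphMeasure n ≤ ∫ θ, ‖gradient f θ - c‖ ^ 2 ∂sphMeasure n := by
  have hgrad := continuousOn_gradient hf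
  have hsgrad := continuousOn_sgrad hf
  have hsq : Integrable (fun θ ↦ ‖sgrad f θ‖ ^ 2) (sphMeasure n) :=
    integrable_sphMeasure_s15 (by fun_prop)
  have hinner : Integrable (fun θ ↦ 2 * ⟪sgrad f θ, c⟫) (sphMeasure n) :=
    integrable_sphMeasure_s15 (by fun_prop)
  have hinner_mean : ∫ θ, ⟪sgrad f θ, c⟫ ∂sphMeasure n = 0 := by
    simp_rw [real_inner_comm c]
    rw [integral_inner (integrable_sphMeasure_s15 hsgrad), hmean, inner_zero_right]
  calc ∫ θ, ‖sgrad f θ‖ ^ 2 ∂sphMeasure n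
      = ∫ θ, (‖sgrad f θ‖ ^ 2 - 2 * ⟪sgrad f θ, c⟫) ∂sphMeasure n := by
        rw [integral_sub hsq hinner, integral_const_mul, hinner_mean, mul_zero, sub_zero]
    _ ≤ ∫ θ, ‖gradient f θ - c‖ ^ 2 ∂sphMeasure n :=
        integral_mono_ae (hsq.sub hinner) (integrable_sphMeasure_s15 (by fun_prop))
          ((ae_mem_sphere n).mono fun θ hθ ↦
            norm_sq_sgrad_sub_le (mem_sphere_zero_iff_norm.1 hθ) c)

end MeanSphericalGradient

end SphericalInequalities

/-- **(6.2) in the proof of Proposition 6.1 (Statement 15).** -/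
theorem sgrad_int_le_euclidean_hess_int
    {n : ℕ} (hn : 2 ≤ n) (f : E n → ℝ) (U : Set (E n)) (hU : IsOpen U)
    (hUS : Metric.sphere (0 : E n) 1 ⊆ U) (hf : ContDiffOn ℝ 2 f U)
    (hlin : ∀ v : E n, ∫ θ, ⟪v, θ⟫ * f θ ∂sphMeasure n = 0) :
    ∫ θ, ‖sgrad f θ‖ ^ 2 ∂sphMeasure n ≤
      (1 / ((n : ℝ) - 1)) * ∫ θ, hsNormSq (hess f θ) ∂sphMeasure n := by
  have : n.AtLeastTwo := ⟨hn⟩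
  have hpos : (0 : ℝ) < n - 1 := sub_pos.2 (mod_cast hn)
  have hf2 : ∀ θ ∈ sphere (0 : E n) 1, ContDiffAt ℝ 2 f θ := fun θ hθ ↦
    hf.contDiffAt (hU.mem_nhds (hUS hθ))
  have hf1 : ∀ θ ∈ sphere (0 : E n) 1, ContDiffAt ℝ 1 f θ := fun θ hθ ↦
    (hf2 θ hθ).of_le one_le_two
  have hgrad : ∀ θ ∈ sphere (0 : E n) 1, ContDiffAt ℝ 1 (gradient f) θ := fun θ hθ ↦
    contDiffAt_gradient (hf2 θ hθ) (by norm_num)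
  have hmoment : ∫ θ, f θ • θ ∂sphMeasure n = 0 := integral_smul_self_eq_zero
    (continuousOn_of_forall_contDiffAt hf1) hlin
  have hmean : ∫ θ, sgrad f θ ∂sphMeasure n = 0 := by
    rw [integral_sgrad hf1, hmoment, smul_zero]
  rw [one_div, le_inv_mul_iff₀ hpos]
  calc ((n : ℝ) - 1) * ∫ θ, ‖sgrad f θ‖ ^ 2 ∂sphMeasure n
      ≤ (n - 1) * ∫ θ, ‖gradient f θ - ∫ η, gradient f η ∂sphMeasure n‖ ^ 2 ∂sphMeasure n :=
        mul_le_mul_of_nonneg_left (integral_norm_sq_sgrad_le hf1 hmean _) hpos.le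
    _ ≤ ∫ θ, hsNormSq (hess f θ) ∂sphMeasure n := poincare_sphMeasure_vectorField hgrad

end SecondOrderConc
end
end
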